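/- Let f be a multicritical circle map with irrational rotation number and chosen critical point c_0, and let 0 ≤ k < a_{n+1} be such that the interval f^{q_n + k q_{n+1}}(I_{n+1}(c_0)) ⊂ I_n(c_0) contains a critical point of f^{q_{n+1}}. Then the length of f^{q_n + k q_{n+1}}(I_{n+1}(c_0)) is comparable to the length of I_n(c_0): there is a constant K > 1 depending only on f such that K^{−1}|I_n(c_0)| ≤ |f^{q_n + k q_{n+1}}(I_{n+1}(c_0))| ≤ K|I_n(c_0)|. -/

import Mathlib

open Set Filter MeasureTheory

noncomputable section

/-- The Schwarzian derivative `Sf = (f''/f')' - (1/2) (f''/f')^2`. -/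
def schwarzianDeriv (f : ℝ → ℝ) (x : ℝ) : ℝ :=
  deriv (fun y => deriv (deriv f) y / deriv f y) x
    - (1 / 2) * (deriv (deriv f) x / deriv f x) ^ 2

/-- A multicritical circle map, described through its lift `F : ℝ → ℝ` to the real line.
It is an orientation-preserving `C^3` circle homeomorphism with finitely many critical
points `c 0, …, c (N-1)`, each of non-flat power-law type: near `c i` the derivative is
pinched between two multiples of `|x - c i| ^ (s i - 1)` with `s i > 1`, the Schwarzian
derivative is negative on a punctured neighborhood of each critical point, and
`log (F')` has bounded variation (bounded by `v`) off the critical neighborhoods. -/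
structure MCM where
  /-- the lift of the circle map -/
  F : ℝ → ℝ
  smooth : ContDiff ℝ 3 F
  mono : StrictMono F
  deg1 : ∀ x, F (x + 1) = F x + 1
  /-- number of critical points -/
  N : ℕ
  N_pos : 0 < N
  /-- the critical points (one representative in `[0,1)` for each) -/
  c : Fin N → ℝ
  c_mem : ∀ i, c i ∈ Set.Ico (0 : ℝ) 1
  c_inj : Function.Injective c
  isCrit : ∀ i, deriv F (c i) = 0
  critOnly : ∀ x, deriv F x = 0 → ∃ (i : Fin N) (k : ℤ), x = c i + (k : ℝ)
  /-- neighborhoods of the critical points -/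
  W : Fin N → Set ℝ
  W_open : ∀ i, IsOpen (W i)
  c_mem_W : ∀ i, c i ∈ W i
  /-- the criticalities (power-law exponents) -/
  s : Fin N → ℝ
  s_gt_one : ∀ i, 1 < s i
  al : Fin N → ℝ
  be : Fin N → ℝ
  al_pos : ∀ i, 0 < al i
  al_lt_be : ∀ i, al i < be i
  powerLaw : ∀ i, ∀ x ∈ W i, x ≠ c i →
    al i * |x - c i| ^ (s i - 1) < deriv F x ∧
      deriv F x < be i * |x - c i| ^ (s i - 1)
  negSchwarzian : ∀ i, ∀ x ∈ W i, x ≠ c i → schwarzianDeriv F x < 0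
  /-- bound for the variation of `log DF` off the critical neighborhoods -/
  v : ℝ
  v_pos : 0 < v
  logDF_var : eVariationOn (fun x => Real.log (deriv F x))
      (Set.Icc 0 1 \ ⋃ (i) (k : ℤ), (fun y => y + (k : ℝ)) '' W i) ≤ ENNReal.ofReal v

/-- The circle map with lift `F` has rotation number `ρ`. -/
def HasRotationNumber (F : ℝ → ℝ) (ρ : ℝ) : Prop :=
  Tendsto (fun n : ℕ => F^[n] 0 / n) atTop (nhds ρ)

/-- The Gauss map `x ↦ {1/x}`. -/
def gaussMap (x : ℝ) : ℝ := Int.fract x⁻¹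

/-- Partial quotients `a_n` of the continued fraction expansion of `ρ ∈ (0,1)`. -/
def cfDigit (ρ : ℝ) (n : ℕ) : ℕ := (⌊(gaussMap^[n] ρ)⁻¹⌋).toNat

/-- Return times: the denominators `q_n` of the convergents of `ρ`,
`q_0 = 1`, `q_1 = a_0`, `q_{n+1} = a_n q_n + q_{n-1}`. -/
def qDen (ρ : ℝ) : ℕ → ℕ
  | 0 => 1
  | 1 => cfDigit ρ 0
  | n + 2 => cfDigit ρ (n + 1) * qDen ρ (n + 1) + qDen ρ n

/-- Numerators `p_n` of the convergents of `ρ`: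
`p_0 = 0`, `p_1 = 1`, `p_{n+1} = a_n p_n + p_{n-1}`. -/
def pNum (ρ : ℝ) : ℕ → ℕ
  | 0 => 0
  | 1 => 1
  | n + 2 => cfDigit ρ (n + 1) * pNum ρ (n + 1) + pNum ρ n

/-- The lift of the atom `I_ℓ^j(x) = f^j(I_ℓ(x))`, where `I_ℓ(x)` is the interval with
endpoints `x` and `f^{q_ℓ}(x)`; the lift of `f^{q_ℓ}(x)` adjacent to `x` is
`F^[q_ℓ] x - p_ℓ`. -/
def atomSet (F : ℝ → ℝ) (ρ x : ℝ) (ℓ j : ℕ) : Set ℝ :=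
  Set.uIcc (F^[j] x) (F^[j + qDen ρ ℓ] x - (pNum ρ ℓ : ℝ))

/-- The length of the atom `I_ℓ^j(x)`. -/
def atomLen (F : ℝ → ℝ) (ρ x : ℝ) (ℓ j : ℕ) : ℝ :=
  |F^[j + qDen ρ ℓ] x - (pNum ρ ℓ : ℝ) - F^[j] x|

/-- The two endpoints (as lifts) of the atom `I_ℓ^j(x)`. -/
def atomEnds (F : ℝ → ℝ) (ρ x : ℝ) (ℓ j : ℕ) : Set ℝ :=
  {F^[j] x, F^[j + qDen ρ ℓ] x - (pNum ρ ℓ : ℝ)}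

/-- `(ℓ, j)` indexes an atom of the `n`-th dynamical partition
`P_n(x) = {I_n^i(x) : i < q_{n+1}} ∪ {I_{n+1}^j(x) : j < q_n}`. -/
def IsAtomIdx (ρ : ℝ) (n ℓ j : ℕ) : Prop :=
  (ℓ = n ∧ j < qDen ρ (n + 1)) ∨ (ℓ = n + 1 ∧ j < qDen ρ n)

/-- Two distinct atoms are adjacent when they share an endpoint on the circle,
i.e. when some endpoints of their lifts differ by an integer. -/
def AdjacentAtoms (F : ℝ → ℝ) (ρ x : ℝ) (ℓ₁ j₁ ℓ₂ j₂ : ℕ) : Prop :=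
  (ℓ₁, j₁) ≠ (ℓ₂, j₂) ∧
    ∃ u ∈ atomEnds F ρ x ℓ₁ j₁, ∃ w ∈ atomEnds F ρ x ℓ₂ j₂, ∃ k : ℤ, w = u + (k : ℝ)

/-!
Write `h = F^[q_n] - p_n` and `g = F^[q_{n+1}] - p_{n+1}` for two consecutive closest returns, which
move points in opposite directions. A single step of `F` multiplies cross-ratios by at most
`exp (ν [a, d])` for a periodic measure `ν` on the line: away from the critical points `F` is a
diffeomorphism with derivative of bounded variation, and near them the negative Schwarzian
derivative makes `F` contract cross-ratios. Since the intervals `F^i [w, h w]`, `i < q_{n+1}`, have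
disjoint interiors modulo `1`, the iterates of `F` up to time `q_n + q_{n+1}` distort cross-ratios
by a bounded factor on intervals spanned by three steps of `h`.

The shortest step of `h` is flanked by longer ones, and every point is carried next to it by such
an iterate; hence consecutive steps of `h` are comparable, and in the same way those of `g`. At a
critical point `c`, the power law makes `F` so flat that `c - g c` cannot be much shorter than
`h c - c`. An orbit segment from a point `z` of the critical atom to `c` brings this comparison back
to `z`, and comparability of steps compares the atom with `I_n(x)`.
-/

/-! ### Cross-ratios -/

/-- The cross-ratio `(b - a)(d - c) / ((c - a)(d - b))` of four points of the line. It is the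
quantity whose growth under iteration is controlled; it tends to `0` when an outer gap becomes
short compared with the middle one. -/
def crossRatio (a b c d : ℝ) : ℝ := (b - a) * (d - c) / ((c - a) * (d - b))

section CrossRatio

variable {a b c d : ℝ}

lemma crossRatio_neg (a b c d : ℝ) : crossRatio (-d) (-c) (-b) (-a) = crossRatio a b c d := by
  simp only [crossRatio]
  congr 1 <;> ring

lemma crossRatio_sub_const (a b c d t : ℝ) :
    crossRatio (a - t) (b - t) (c - t) (d - t) = crossRatio a b c d := by
  simp only [crossRatio, sub_sub_sub_cancel_right]

lemma crossRatio_pos (hab : a < b) (hbc : b < c) (hcd : c < d) : 0 < crossRatio a b c d :=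
  div_pos (mul_pos (sub_pos.2 hab) (sub_pos.2 hcd))
    (mul_pos (sub_pos.2 (hab.trans hbc)) (sub_pos.2 (hbc.trans hcd)))

lemma crossRatio_mul_sub_le_left (hab : a < b) (hbc : b < c) (hcd : c < d) :
    crossRatio a b c d * (c - b) ≤ b - a := by
  have hac : 0 < c - a := by linarith
  have hbd : 0 < d - b := by linarith
  have : (c - b) * (d - c) ≤ (c - a) * (d - b) := by gcongr
  rw [crossRatio, div_mul_eq_mul_div, div_le_iff₀ (mul_pos hac hbd)]
  calc (b - a) * (d - c) * (c - b) = (b - a) * ((c - b) * (d - c)) := by ring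
    _ ≤ (b - a) * ((c - a) * (d - b)) := by gcongr

lemma inv_le_crossRatio_of_balanced {A : ℝ} (hab : a < b) (hbc : b < c) (hcd : c < d)
    (hl : c - b ≤ A * (b - a)) (hr : c - b ≤ A * (d - c)) :
    ((1 + A) ^ 2)⁻¹ ≤ crossRatio a b c d := by
  have hA : 0 < A := pos_of_mul_pos_left ((sub_pos.2 hbc).trans_le hl) (sub_pos.2 hab).le
  rw [crossRatio, inv_le_iff_one_le_mul₀ (by positivity), mul_comm, ← mul_div_assoc,
    one_le_div (mul_pos (by linarith) (by linarith))]
  calc (c - a) * (d - b) ≤ ((1 + A) * (b - a)) * ((1 + A) * (d - c)) := by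
        gcongr <;> linarith
    _ = (1 + A) ^ 2 * ((b - a) * (d - c)) := by ring

section Distortion

variable {a' b' c' d' A C : ℝ}

lemma middle_le_left_of_crossRatio_le (hab : a < b) (hbc : b < c) (hcd : c < d)
    (hab' : a' < b') (hbc' : b' < c') (hcd' : c' < d')
    (hl : c' - b' ≤ A * (b' - a')) (hr : c' - b' ≤ A * (d' - c')) (hC : 0 ≤ C)
    (h : crossRatio a' b' c' d' ≤ C * crossRatio a b c d) :
    c - b ≤ C * (1 + A) ^ 2 * (b - a) := by
  have hA : 0 < A := pos_of_mul_pos_left ((sub_pos.2 hbc').trans_le hl) (sub_pos.2 hab').le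
  have hbal := (inv_le_crossRatio_of_balanced hab' hbc' hcd' hl hr).trans h
  rw [inv_le_iff_one_le_mul₀ (by positivity)] at hbal
  calc c - b ≤ C * crossRatio a b c d * (1 + A) ^ 2 * (c - b) :=
        le_mul_of_one_le_left (sub_pos.2 hbc).le hbal
    _ = C * (1 + A) ^ 2 * (crossRatio a b c d * (c - b)) := by ring
    _ ≤ C * (1 + A) ^ 2 * (b - a) := by
        gcongr
        exact crossRatio_mul_sub_le_left hab hbc hcd

lemma middle_le_right_of_crossRatio_le (hab : a < b) (hbc : b < c) (hcd : c < d)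
    (hab' : a' < b') (hbc' : b' < c') (hcd' : c' < d')
    (hl : c' - b' ≤ A * (b' - a')) (hr : c' - b' ≤ A * (d' - c')) (hC : 0 ≤ C)
    (h : crossRatio a' b' c' d' ≤ C * crossRatio a b c d) :
    c - b ≤ C * (1 + A) ^ 2 * (d - c) := by
  rw [← crossRatio_neg a', ← crossRatio_neg a] at h
  have := middle_le_left_of_crossRatio_le (neg_lt_neg hcd) (neg_lt_neg hbc) (neg_lt_neg hab)
    (neg_lt_neg hcd') (neg_lt_neg hbc') (neg_lt_neg hab') (A := A) (by linarith) (by linarith) hC h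
  linarith

lemma le_mul_crossRatio_mul {l s P Q M : ℝ} (hab : a < b) (hbc : b < c) (hcd : c < d)
    (hs : 0 < s) (hP : 0 ≤ P) (hl : l ≤ P * (b - a)) (hr : s ≤ Q * (d - c))
    (hac : c - a ≤ M * s) (hbd : d - b ≤ M * s) :
    l ≤ P * Q * M ^ 2 * crossRatio a b c d * s := by
  have hab' := sub_pos.2 hab
  have hac' := sub_pos.2 (hab.trans hbc)
  have hbd' := sub_pos.2 (hbc.trans hcd)
  have hQ : 0 < Q := pos_of_mul_pos_left (hs.trans_le hr) (sub_pos.2 hcd).le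
  have hpos := crossRatio_pos hab hbc hcd
  refine le_of_mul_le_mul_right ?_ hs
  calc l * s ≤ (P * (b - a)) * (Q * (d - c)) := mul_le_mul hl hr hs.le (by positivity)
    _ = P * Q * crossRatio a b c d * ((c - a) * (d - b)) := by
        rw [crossRatio]
        field_simp
    _ ≤ P * Q * crossRatio a b c d * ((M * s) * (M * s)) := by
        gcongr
        exact hac'.le.trans hac
    _ = _ := by ring

lemma crossRatio_map_le_of_slope_le {F : ℝ → ℝ} (hF : StrictMono F) {q : ℝ}
    (hab : a < b) (hbc : b < c) (hcd : c < d) (hl : slope F a b ≤ q * slope F a c)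
    (hr : slope F c d ≤ q * slope F b d) :
    crossRatio (F a) (F b) (F c) (F d) ≤ q ^ 2 * crossRatio a b c d := by
  have hFac := sub_pos.2 (hF (hab.trans hbc))
  have hFbd := sub_pos.2 (hF (hbc.trans hcd))
  have hac := sub_pos.2 (hab.trans hbc)
  have hbd := sub_pos.2 (hbc.trans hcd)
  have hab := sub_pos.2 hab
  have hcd' := sub_pos.2 hcd
  have hFcd := sub_pos.2 (hF hcd)
  simp only [slope_def_field] at hl hr
  have key : (F b - F a) / (b - a) * ((F d - F c) / (d - c)) ≤
      q * ((F c - F a) / (c - a)) * (q * ((F d - F b) / (d - b))) :=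
    mul_le_mul hl hr (by positivity)
      ((div_pos (sub_pos.2 (hF (sub_pos.1 hab))) hab).le.trans hl)
  have e₁ : crossRatio (F a) (F b) (F c) (F d) =
      (F b - F a) / (b - a) * ((F d - F c) / (d - c)) *
        ((b - a) * (d - c) / ((F c - F a) * (F d - F b))) := by
    unfold crossRatio; field_simp
  have e₂ : q ^ 2 * crossRatio a b c d =
      q * ((F c - F a) / (c - a)) * (q * ((F d - F b) / (d - b))) *
        ((b - a) * (d - c) / ((F c - F a) * (F d - F b))) := by
    unfold crossRatio; field_simp
  rw [e₁, e₂]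
  gcongr

end Distortion

end CrossRatio

/-! ### Negative Schwarzian derivative -/

section NegativeSchwarzian

variable {G : ℝ → ℝ} {a b c d t : ℝ}

lemma convexOn_deriv_rpow_neg_half (hG : ContDiff ℝ 3 G) (hpos : ∀ x ∈ Icc a d, 0 < deriv G x)
    (hS : ∀ x ∈ Icc a d, schwarzianDeriv G x ≤ 0) :
    ConvexOn ℝ (Icc a d) (fun x => deriv G x ^ (-(1 / 2) : ℝ)) := by
  have hG₁ : Differentiable ℝ (deriv G) :=
    (hG.iterate_deriv' 2 1).differentiable (by norm_num)
  have hG₂ : Differentiable ℝ (deriv (deriv G)) :=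
    (hG.iterate_deriv' 1 2).differentiable (by norm_num)
  set N : ℝ → ℝ := fun y => deriv (deriv G) y / deriv G y with hN
  have hψ : ∀ x ∈ Icc a d, HasDerivAt (fun x => deriv G x ^ (-(1 / 2) : ℝ))
      (-(1 / 2) * N x * deriv G x ^ (-(1 / 2) : ℝ)) x := fun x hx => by
    refine ((hG₁ x).hasDerivAt.rpow_const (Or.inl (hpos x hx).ne')).congr_deriv ?_
    rw [Real.rpow_sub_one (hpos x hx).ne']
    simp only [hN]; ring
  have hψ' : ∀ x ∈ Icc a d, HasDerivAt (fun x => -(1 / 2) * N x * deriv G x ^ (-(1 / 2) : ℝ))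
      (-(1 / 2) * schwarzianDeriv G x * deriv G x ^ (-(1 / 2) : ℝ)) x := fun x hx => by
    have hNx : HasDerivAt N (deriv N x) x := ((hG₂ x).div (hG₁ x) (hpos x hx).ne').hasDerivAt
    refine ((hNx.const_mul _).mul (hψ x hx)).congr_deriv ?_
    simp only [schwarzianDeriv, hN]; ring
  refine convexOn_of_hasDerivWithinAt2_nonneg (convex_Icc a d)
    (fun x hx => (hψ x hx).continuousAt.continuousWithinAt)
    (fun x hx => (hψ x (interior_subset hx)).hasDerivWithinAt)
    (fun x hx => (hψ' x (interior_subset hx)).hasDerivWithinAt) fun x hx => ?_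
  have hx := interior_subset hx
  exact mul_nonneg (by linarith [hS x hx]) (Real.rpow_nonneg (hpos x hx).le _)

-- The right-hand side is the increment of the Möbius map with derivative `(p + m (x - t))⁻²`.
lemma mul_affine_mul_sub_le (hG : Differentiable ℝ G) {p m y : ℝ} (hp : 0 < p) (hty : t ≤ y)
    (hGm : G t ≤ G y)
    (h : ∀ x ∈ Icc t y, 0 ≤ p + m * (x - t) → deriv G x * (p + m * (x - t)) ^ 2 ≤ 1) :
    p * (p + m * (y - t)) * (G y - G t) ≤ y - t := by
  rcases le_or_gt (p + m * (y - t)) 0 with hy | hy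
  · have := mul_nonpos_of_nonpos_of_nonneg (mul_nonpos_of_nonneg_of_nonpos hp.le hy)
      (sub_nonneg.2 hGm)
    linarith
  have hpos : ∀ x ∈ Icc t y, 0 < p + m * (x - t) := fun x hx => by
    rcases le_total 0 m with hm | hm
    · have := mul_nonneg hm (sub_nonneg.2 hx.1); linarith
    · have := mul_le_mul_of_nonpos_left (sub_le_sub_right hx.2 t) hm; linarith
  set M : ℝ → ℝ := fun x => (x - t) / (p * (p + m * (x - t))) with hM
  have hM' : ∀ x ∈ Icc t y, HasDerivAt M (1 / (p + m * (x - t)) ^ 2) x := fun x hx => by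
    have h₁ : HasDerivAt (fun x : ℝ => x - t) 1 x := (hasDerivAt_id x).sub_const t
    have h₀ := hpos x hx
    refine (h₁.div (((h₁.const_mul m).const_add p).const_mul p) (by positivity)).congr_deriv ?_
    field_simp
    ring
  have hle : G y - G t ≤ M y - M t := by
    have hd : ∀ x ∈ Icc t y, HasDerivAt (fun x => M x - G x) _ x := fun x hx =>
      (hM' x hx).sub (hG x).hasDerivAt
    have hmono : MonotoneOn (fun x => M x - G x) (Icc t y) := by
      refine monotoneOn_of_deriv_nonneg (convex_Icc t y)
        (fun x hx => (hd x hx).continuousAt.continuousWithinAt)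
        (fun x hx => (hd x (interior_subset hx)).differentiableAt.differentiableWithinAt)
        fun x hx => ?_
      have hx := interior_subset hx
      have h₀ := hpos x hx
      rw [(hd x hx).deriv, sub_nonneg, le_div_iff₀ (by positivity)]
      exact h x hx h₀.le
    linarith [hmono (left_mem_Icc.2 hty) (right_mem_Icc.2 hty) hty]
  calc p * (p + m * (y - t)) * (G y - G t) ≤ p * (p + m * (y - t)) * (M y - M t) := by gcongr
    _ = y - t := by simp only [hM]; field_simp; simp

lemma exists_affine_deriv_mul_sq_le_one (hG : ContDiff ℝ 3 G)
    (hpos : ∀ x ∈ Icc a d, 0 < deriv G x) (hS : ∀ x ∈ Icc a d, schwarzianDeriv G x ≤ 0)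
    (ht : t ∈ Icc a d) :
    ∃ p m : ℝ, 0 < p ∧ deriv G t * p ^ 2 = 1 ∧
      ∀ x ∈ Icc a d, 0 ≤ p + m * (x - t) → deriv G x * (p + m * (x - t)) ^ 2 ≤ 1 := by
  have hψ := convexOn_deriv_rpow_neg_half hG hpos hS
  set ψ : ℝ → ℝ := fun x => deriv G x ^ (-(1 / 2) : ℝ) with hψdef
  have hψsq : ∀ x ∈ Icc a d, deriv G x * ψ x ^ 2 = 1 := fun x hx => by
    rw [hψdef, ← Real.rpow_mul_natCast (hpos x hx).le]
    norm_num [Real.rpow_neg_one, (hpos x hx).ne']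
  have hd : HasDerivAt ψ (deriv ψ t) t :=
    (((hG.iterate_deriv' 2 1).differentiable (by norm_num) t).rpow_const
      (Or.inl (hpos t ht).ne')).hasDerivAt
  have htangent : ∀ x ∈ Icc a d, ψ t + deriv ψ t * (x - t) ≤ ψ x := fun x hx => by
    rcases lt_trichotomy x t with hxt | rfl | hxt
    · have := hψ.slope_le_of_hasDerivAt hx ht hxt hd
      rw [slope_def_field, div_le_iff₀ (by linarith)] at this
      linarith
    · simp
    · have := hψ.le_slope_of_hasDerivAt ht hx hxt hd
      rw [slope_def_field, le_div_iff₀ (by linarith)] at this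
      linarith
  refine ⟨ψ t, deriv ψ t, Real.rpow_pos_of_pos (hpos t ht) _, hψsq t ht, fun x hx h₀ => ?_⟩
  rw [← hψsq x hx]
  have := hpos x hx
  gcongr
  exact htangent x hx

lemma sub_mul_le_deriv_mul_of_schwarzianDeriv_nonpos (hG : ContDiff ℝ 3 G)
    (hmono : StrictMono G) (hpos : ∀ x ∈ Icc a d, 0 < deriv G x)
    (hS : ∀ x ∈ Icc a d, schwarzianDeriv G x ≤ 0) (hat : a < t) (htd : t < d) :
    (d - a) * ((G t - G a) * (G d - G t)) ≤
      deriv G t * (G d - G a) * ((t - a) * (d - t)) := by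
  have hGd : Differentiable ℝ G := hG.differentiable (by norm_num)
  obtain ⟨p, m, hp, hpt, htangent⟩ := exists_affine_deriv_mul_sq_le_one hG hpos hS ⟨hat.le, htd.le⟩
  have hright : p * (p + m * (d - t)) * (G d - G t) ≤ d - t :=
    mul_affine_mul_sub_le hGd hp htd.le (hmono htd).le
      fun x hx => htangent x ⟨hat.le.trans hx.1, hx.2⟩
  have hleft : p * (p + m * (a - t)) * (G t - G a) ≤ t - a := by
    have := mul_affine_mul_sub_le (G := fun x => -G (-x)) (t := -t) (y := -a) (m := -m)
      (hGd.comp differentiable_neg).neg hp (neg_le_neg hat.le)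
      (by simpa using (hmono hat).le) fun x hx h₀ => by
        have := htangent (-x) ⟨by linarith [hx.2], by linarith [hx.1]⟩ (by linarith)
        rw [deriv.fun_neg, deriv_comp_neg, neg_neg]
        linarith
    simp only [neg_neg] at this
    linarith
  have hGat := hmono hat
  have hGtd := hmono htd
  calc (d - a) * ((G t - G a) * (G d - G t))
      = deriv G t * ((d - t) * (G d - G t) * (p * (p + m * (a - t)) * (G t - G a)) +
          (t - a) * (G t - G a) * (p * (p + m * (d - t)) * (G d - G t))) := by
        linear_combination (-(d - a) * ((G t - G a) * (G d - G t))) * hpt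
    _ ≤ deriv G t * ((d - t) * (G d - G t) * (t - a) + (t - a) * (G t - G a) * (d - t)) := by
        have := hpos t ⟨hat.le, htd.le⟩
        gcongr
    _ = deriv G t * (G d - G a) * ((t - a) * (d - t)) := by ring

lemma crossRatio_map_le_of_schwarzianDeriv_nonpos (hG : ContDiff ℝ 3 G) (hmono : StrictMono G)
    (hab : a < b) (hbc : b < c) (hcd : c < d) (hpos : ∀ x ∈ Icc a d, 0 < deriv G x)
    (hS : ∀ x ∈ Icc a d, schwarzianDeriv G x ≤ 0) :
    crossRatio (G a) (G b) (G c) (G d) ≤ crossRatio a b c d := by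
  set R : ℝ → ℝ := fun t => ((G d - G t) * (t - a)) / ((G t - G a) * (d - t)) with hR
  have hgap : ∀ t ∈ Icc b c, 0 < G t - G a ∧ 0 < G d - G t ∧ 0 < t - a ∧ 0 < d - t :=
    fun t ht =>
      have hat : a < t := hab.trans_le ht.1
      have htd : t < d := ht.2.trans_lt hcd
      ⟨sub_pos.2 (hmono hat), sub_pos.2 (hmono htd), sub_pos.2 hat, sub_pos.2 htd⟩
  have hR' : ∀ t ∈ Icc b c, HasDerivAt R
      (((d - a) * ((G t - G a) * (G d - G t)) - deriv G t * (G d - G a) * ((t - a) * (d - t))) /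
        ((G t - G a) * (d - t)) ^ 2) t := fun t ht => by
    obtain ⟨h₁, -, -, h₄⟩ := hgap t ht
    have hGt := (hG.differentiable (by norm_num) t).hasDerivAt
    refine (((hGt.const_sub (G d)).fun_mul ((hasDerivAt_id' t).sub_const a)).fun_div
      ((hGt.sub_const (G a)).fun_mul ((hasDerivAt_id' t).const_sub d))
      (mul_pos h₁ h₄).ne').congr_deriv ?_
    ring
  have hanti : AntitoneOn R (Icc b c) := by
    refine antitoneOn_of_deriv_nonpos (convex_Icc b c)
      (fun x hx => (hR' x hx).continuousAt.continuousWithinAt)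
      (fun x hx => (hR' x (interior_subset hx)).differentiableAt.differentiableWithinAt)
      fun x hx => ?_
    have hx := interior_subset hx
    rw [(hR' x hx).deriv]
    exact div_nonpos_of_nonpos_of_nonneg (sub_nonpos.2
      (sub_mul_le_deriv_mul_of_schwarzianDeriv_nonpos hG hmono hpos hS (hab.trans_le hx.1)
        (hx.2.trans_lt hcd))) (sq_nonneg _)
  have hRcb : R c ≤ R b := hanti (left_mem_Icc.2 hbc.le) (right_mem_Icc.2 hbc.le) hbc.le
  obtain ⟨hb₁, hb₂, _, hb₄⟩ := hgap b (left_mem_Icc.2 hbc.le)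
  obtain ⟨hc₁, _, hc₃, _⟩ := hgap c (right_mem_Icc.2 hbc.le)
  simp only [hR] at hRcb
  rw [div_le_div_iff₀ (by positivity) (by positivity)] at hRcb
  rw [crossRatio, crossRatio, div_le_div_iff₀ (by positivity) (by positivity)]
  linarith

end NegativeSchwarzian

/-! ### Power laws at critical points -/

section PowerLaw

variable {G : ℝ → ℝ} {e x y z : ℝ}

lemma slope_le_of_deriv_le_rpow {β u v : ℝ} (hG : Differentiable ℝ G) (he : 0 ≤ e) (hβ : 0 ≤ β)
    (hb : ∀ t ∈ Icc x y, deriv G t ≤ β * |t - z| ^ e) (hxu : x ≤ u) (huv : u < v) (hvy : v ≤ y) :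
    slope G u v ≤ β * max |x - z| |y - z| ^ e := by
  obtain ⟨ξ, hξ, h⟩ := exists_deriv_eq_slope' G huv hG.continuous.continuousOn hG.differentiableOn
  have hξ' : ξ ∈ Icc x y := ⟨hxu.trans hξ.1.le, hξ.2.le.trans hvy⟩
  rw [← h]
  refine (hb ξ hξ').trans ?_
  gcongr
  exact abs_le_max_abs_abs (by linarith [hξ'.1]) (by linarith [hξ'.2])

-- On the part of `[x, y]` farther than `(y - z) / 2` from `z`, which is at least a quarter of it,
-- the derivative is comparable to its maximum.
lemma le_slope_of_rpow_le_deriv_right {α : ℝ} (hG : Differentiable ℝ G) (hmono : Monotone G)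
    (he : 0 ≤ e) (hα : 0 ≤ α) (hb : ∀ t ∈ Icc x y, α * |t - z| ^ e ≤ deriv G t) (hxy : x < y)
    (hM : |x - z| ≤ y - z) : α * ((y - z) / 2) ^ e / 4 ≤ slope G x y := by
  have hM₁ := (abs_le.1 hM).1
  set x' := max x (z + (y - z) / 2) with hx'
  have hx'y : x' < y := max_lt hxy (by linarith)
  have hlen : (y - x) / 4 ≤ y - x' := by
    rcases max_cases x (z + (y - z) / 2) with ⟨h, _⟩ | ⟨h, _⟩ <;> rw [hx', h] <;> linarith
  obtain ⟨ξ, hξ, h⟩ := exists_deriv_eq_slope' G hx'y hG.continuous.continuousOn hG.differentiableOn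
  have hξz : (y - z) / 2 ≤ |ξ - z| :=
    le_trans (by linarith [(le_max_right x (z + (y - z) / 2)).trans hξ.1.le]) (le_abs_self _)
  have hderiv : α * ((y - z) / 2) ^ e ≤ slope G x' y := by
    rw [← h]
    refine le_trans ?_ (hb ξ ⟨(le_max_left _ _).trans hξ.1.le, hξ.2.le⟩)
    gcongr
    linarith
  rw [slope_def_field, le_div_iff₀ (by linarith)] at hderiv ⊢
  calc α * ((y - z) / 2) ^ e / 4 * (y - x) = α * ((y - z) / 2) ^ e * ((y - x) / 4) := by ring
    _ ≤ α * ((y - z) / 2) ^ e * (y - x') :=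
        mul_le_mul_of_nonneg_left hlen (mul_nonneg hα (Real.rpow_nonneg (by linarith) e))
    _ ≤ G y - G x' := hderiv
    _ ≤ G y - G x := by linarith [hmono (le_max_left x (z + (y - z) / 2))]

lemma le_slope_of_rpow_le_deriv {α : ℝ} (hG : Differentiable ℝ G) (hmono : Monotone G)
    (he : 0 ≤ e) (hα : 0 ≤ α) (hb : ∀ t ∈ Icc x y, α * |t - z| ^ e ≤ deriv G t) (hxy : x < y) :
    α * (max |x - z| |y - z| / 2) ^ e / 4 ≤ slope G x y := by
  rcases le_total |x - z| |y - z| with h | h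
  · have hy : |y - z| = y - z := abs_of_nonneg (by
      by_contra! hneg
      rw [abs_of_neg hneg] at h
      linarith [abs_le.1 h])
    rw [max_eq_right h, hy]
    exact le_slope_of_rpow_le_deriv_right hG hmono he hα hb hxy (h.trans_eq hy)
  · have hx : |x - z| = z - x := by
      rw [abs_sub_comm]
      refine abs_of_nonneg ?_
      by_contra! hneg
      rw [abs_of_pos (by linarith : 0 < x - z)] at h
      linarith [abs_le.1 h]
    have hrefl := le_slope_of_rpow_le_deriv_right (G := fun t => -G (-t)) (x := -y) (y := -x)
      (z := -z) (hG.comp differentiable_neg).neg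
      (fun s t hst => neg_le_neg (hmono (neg_le_neg hst)))
      he hα (fun t ht => by
        have := hb (-t) ⟨by linarith [ht.2], by linarith [ht.1]⟩
        rwa [deriv.fun_neg, deriv_comp_neg, neg_neg, ← abs_neg, neg_sub', neg_neg])
      (neg_lt_neg hxy) (by
        rw [hx, abs_sub_comm] at h
        rwa [neg_sub_neg, neg_sub_neg])
    rw [max_eq_left h, hx]
    convert hrefl using 1
    · ring_nf
    · simp only [slope_def_field, neg_neg]
      congr 1 <;> ring

end PowerLaw

/-- `F` obeys a two-sided power law of exponent `e + 1` at `c`. It is expressed through the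
slopes of the chords at `c`, which behave like `|y - c| ^ e`, so `c` is critical if `e > 0`. -/
def HasPowerLawAt (F : ℝ → ℝ) (c e α β : ℝ) : Prop :=
  ∀ y, y ≠ c → |y - c| ≤ 1 → α * |y - c| ^ e ≤ slope F c y ∧ slope F c y ≤ β * |y - c| ^ e

/-- `V` is the distribution function of a measure on the circle, of total mass `K`, that controls
the distortion of cross-ratios by `F`. -/
structure IsCrossRatioGauge (F V : ℝ → ℝ) (K : ℝ) : Prop where
  monotone : Monotone V
  map_add_one : ∀ x, V (x + 1) = V x + K
  crossRatio_map_le : ∀ ⦃a b c d⦄, a < b → b < c → c < d →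
    crossRatio (F a) (F b) (F c) (F d) ≤ Real.exp (V d - V a) * crossRatio a b c d

/-! ### Cross-ratio distortion of a multicritical circle map -/

namespace MCM

variable (f : MCM)

/-- The lift of a multicritical circle map as an element of `CircleDeg1Lift`. -/
def toLift : CircleDeg1Lift := ⟨⟨f.F, f.mono.monotone⟩, f.deg1⟩

lemma map_add_int (x : ℝ) (k : ℤ) : f.F (x + k) = f.F x + k := f.toLift.map_add_int x k

lemma differentiable : Differentiable ℝ f.F := f.smooth.differentiable (by norm_num)

lemma deriv_nonneg (x : ℝ) : 0 ≤ deriv f.F x := f.mono.monotone.deriv_nonneg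

lemma periodic_deriv : Function.Periodic (deriv f.F) 1 := fun x => by
  have h : (fun x => f.F (x + 1)) = fun x => f.F x + 1 := funext f.deg1
  rw [← deriv_comp_add_const, h, deriv_add_const]

lemma periodic_deriv_deriv : Function.Periodic (deriv (deriv f.F)) 1 := fun x => by
  have h : (fun x => deriv f.F (x + 1)) = deriv f.F := funext f.periodic_deriv
  rw [← deriv_comp_add_const, h]

lemma deriv_add_int (x : ℝ) (k : ℤ) : deriv f.F (x + k) = deriv f.F x := by
  simpa using f.periodic_deriv.int_mul k x

lemma continuous_deriv : Continuous (deriv f.F) := (f.smooth.iterate_deriv' 2 1).continuous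

lemma exists_deriv_le : ∃ B > 0, ∀ x, deriv f.F x ≤ B := by
  obtain ⟨B, hB, h⟩ := (f.periodic_deriv.isBounded_of_continuous one_ne_zero
    f.continuous_deriv).exists_pos_norm_le
  exact ⟨B, hB, fun x => (le_abs_self _).trans (h _ (mem_range_self x))⟩

lemma exists_abs_deriv_deriv_le : ∃ B > 0, ∀ x, |deriv (deriv f.F) x| ≤ B := by
  obtain ⟨B, hB, h⟩ := (f.periodic_deriv_deriv.isBounded_of_continuous one_ne_zero
    (f.smooth.iterate_deriv' 1 2).continuous).exists_pos_norm_le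
  exact ⟨B, hB, fun x => h _ (mem_range_self x)⟩

lemma exists_add_mem_W : ∃ δ > 0, ∀ i t, |t| < 3 * δ → f.c i + t ∈ f.W i := by
  have hball : ∀ i, ∃ ε > 0, Metric.ball (f.c i) ε ⊆ f.W i := fun i =>
    Metric.isOpen_iff.1 (f.W_open i) _ (f.c_mem_W i)
  choose ε hε hW using hball
  have : Nonempty (Fin f.N) := ⟨⟨0, f.N_pos⟩⟩
  obtain ⟨j, hj⟩ := Finite.exists_min ε
  refine ⟨ε j / 3, div_pos (hε j) three_pos, fun i t ht => hW i ?_⟩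
  rw [Metric.mem_ball, Real.dist_eq, add_sub_cancel_left]
  linarith [hj i]

lemma exists_le_deriv_of_far {δ : ℝ} (hδ : 0 < δ) :
    ∃ η > 0, ∀ x, (∀ i (k : ℤ), δ ≤ |x - (f.c i + k)|) → η ≤ deriv f.F x := by
  set S : Set ℝ := Icc 0 1 ∩ ⋂ (i) (k : ℤ), {x | δ ≤ |x - (f.c i + k)|}
  have hSc : IsCompact S := isCompact_Icc.inter_right <|
    isClosed_iInter fun i => isClosed_iInter fun k => isClosed_le continuous_const (by fun_prop)
  have hpos : ∀ x ∈ S, 0 < deriv f.F x := fun x hx => by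
    refine (f.deriv_nonneg x).lt_of_ne fun h => ?_
    obtain ⟨i, k, rfl⟩ := f.critOnly x h.symm
    have := mem_iInter₂.1 hx.2 i k
    simp only [mem_ofPred_eq, sub_self, abs_zero] at this
    linarith
  obtain ⟨η, hη, hle⟩ : ∃ η > 0, ∀ x ∈ S, η ≤ deriv f.F x := by
    rcases S.eq_empty_or_nonempty with h | h
    · exact ⟨1, one_pos, by simp [h]⟩
    · obtain ⟨x, hx, hmin⟩ := hSc.exists_isMinOn h f.continuous_deriv.continuousOn
      exact ⟨_, hpos x hx, fun y hy => hmin hy⟩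
  refine ⟨η, hη, fun x hx => ?_⟩
  have hfract : deriv f.F (Int.fract x) = deriv f.F x := by
    rw [← f.deriv_add_int _ ⌊x⌋, Int.fract_add_floor]
  rw [← hfract]
  refine hle _ ⟨⟨Int.fract_nonneg x, (Int.fract_lt_one x).le⟩, mem_iInter₂.2 fun i k => ?_⟩
  have := hx i (k + ⌊x⌋)
  rw [mem_ofPred_eq, Int.fract]
  push_cast at this
  convert this using 2
  ring

lemma deriv_pinched {i : Fin f.N} (k : ℤ) {x : ℝ} (h : x - k ∈ f.W i) :
    f.al i * |x - (f.c i + k)| ^ (f.s i - 1) ≤ deriv f.F x ∧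
      deriv f.F x ≤ f.be i * |x - (f.c i + k)| ^ (f.s i - 1) := by
  have hx : deriv f.F x = deriv f.F (x - k) := by rw [← f.deriv_add_int (x - k) k, sub_add_cancel]
  have hs : f.s i - 1 ≠ 0 := (sub_pos.2 (f.s_gt_one i)).ne'
  rw [hx, add_comm, ← sub_sub]
  rcases eq_or_ne (x - k) (f.c i) with h₀ | h₀
  · simp [h₀, f.isCrit i, Real.zero_rpow hs]
  · exact ⟨(f.powerLaw i _ h h₀).1.le, (f.powerLaw i _ h h₀).2.le⟩

lemma exists_near_critical_or_le_deriv {δ η x y : ℝ}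
    (hη : ∀ x, (∀ i (k : ℤ), δ ≤ |x - (f.c i + k)|) → η ≤ deriv f.F x) (hxy : y - x < δ) :
    (∃ i, ∃ k : ℤ, ∀ t ∈ Icc x y, |t - (f.c i + k)| < 2 * δ) ∨
      ∀ t ∈ Icc x y, η ≤ deriv f.F t := by
  by_cases h : ∀ t ∈ Icc x y, ∀ i (k : ℤ), δ ≤ |t - (f.c i + k)|
  · exact Or.inr fun t ht => hη t (h t ht)
  · push Not at h
    obtain ⟨t, ht, i, k, h⟩ := h
    refine Or.inl ⟨i, k, fun u hu => ?_⟩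
    rw [abs_lt] at h ⊢
    constructor <;> linarith [ht.1, ht.2, hu.1, hu.2]

lemma slope_le_slope_near_critical {δ : ℝ} (hW : ∀ i t, |t| < 3 * δ → f.c i + t ∈ f.W i)
    (i : Fin f.N) (k : ℤ) {x y u v : ℝ} (h : ∀ t ∈ Icc x y, |t - (f.c i + k)| < 2 * δ)
    (hxu : x ≤ u) (huv : u < v) (hvy : v ≤ y) :
    slope f.F u v ≤ 4 * 2 ^ (f.s i - 1) * (f.be i / f.al i) * slope f.F x y := by
  have hα := f.al_pos i
  have hβ : 0 < f.be i := hα.trans (f.al_lt_be i)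
  have he : 0 ≤ f.s i - 1 := by linarith [f.s_gt_one i]
  have hmem : ∀ t ∈ Icc x y, t - k ∈ f.W i := fun t ht => by
    have := hW i (t - (f.c i + k)) (by linarith [abs_nonneg (t - (f.c i + k)), h t ht])
    convert this using 1
    ring
  have hup := slope_le_of_deriv_le_rpow f.differentiable he hβ.le
    (fun t ht => (f.deriv_pinched k (hmem t ht)).2) hxu huv hvy
  have hlow := le_slope_of_rpow_le_deriv f.differentiable f.mono.monotone he hα.le
    (fun t ht => (f.deriv_pinched k (hmem t ht)).1) (by linarith)
  set M := max |x - (f.c i + k)| |y - (f.c i + k)|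
  rw [Real.div_rpow (le_max_of_le_left (abs_nonneg _)) zero_le_two] at hlow
  calc slope f.F u v ≤ f.be i * M ^ (f.s i - 1) := hup
    _ = 4 * 2 ^ (f.s i - 1) * (f.be i / f.al i) *
          (f.al i * (M ^ (f.s i - 1) / 2 ^ (f.s i - 1)) / 4) := by field_simp
    _ ≤ _ := by gcongr

lemma exists_le_slope_of_le_sub {δ : ℝ} (hδ : 0 < δ) :
    ∃ η > 0, ∀ x y, δ ≤ y - x → η ≤ slope f.F x y := by
  have hc : Continuous fun x => f.F (x + δ) - f.F x := by
    have := f.smooth.continuous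
    fun_prop
  obtain ⟨x₀, -, hmin⟩ := isCompact_Icc.exists_isMinOn (nonempty_Icc.2 zero_le_one) hc.continuousOn
  set η := f.F (x₀ + δ) - f.F x₀
  have hη : 0 < η := sub_pos.2 (f.mono (by linarith))
  have hmin' : ∀ x, η ≤ f.F (x + δ) - f.F x := fun x => by
    have h : η ≤ f.F (Int.fract x + δ) - f.F (Int.fract x) :=
      hmin ⟨Int.fract_nonneg x, (Int.fract_lt_one x).le⟩
    have h₁ := f.map_add_int (Int.fract x) ⌊x⌋
    have h₂ := f.map_add_int (Int.fract x + δ) ⌊x⌋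
    rw [Int.fract_add_floor] at h₁
    rw [add_right_comm, Int.fract_add_floor] at h₂
    linarith
  refine ⟨min η (1 / 2), lt_min hη one_half_pos, fun x y hxy => ?_⟩
  rw [slope_def_field, le_div_iff₀ (hδ.trans_le hxy)]
  rcases le_total (y - x) 1 with h | h
  · calc min η (1 / 2) * (y - x) ≤ η * 1 := by gcongr; exacts [by linarith, min_le_left _ _]
      _ ≤ f.F (x + δ) - f.F x := by simpa using hmin' x
      _ ≤ f.F y - f.F x := sub_le_sub_right (f.mono.monotone (by linarith)) _
  · have hfloor : (1 : ℝ) ≤ ⌊y - x⌋ := by exact_mod_cast Int.le_floor.2 (by exact_mod_cast h)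
    have hmap := f.map_add_int x ⌊y - x⌋
    calc min η (1 / 2) * (y - x) ≤ 1 / 2 * (y - x) := by gcongr; exact min_le_right _ _
      _ ≤ ⌊y - x⌋ := by linarith [Int.lt_floor_add_one (y - x)]
      _ = f.F (x + ⌊y - x⌋) - f.F x := by linarith
      _ ≤ f.F y - f.F x :=
          sub_le_sub_right (f.mono.monotone (by linarith [Int.floor_le (y - x)])) _

lemma exists_slope_le_mul_slope :
    ∃ Q ≥ 1, ∀ x u v y, x ≤ u → u < v → v ≤ y → slope f.F u v ≤ Q * slope f.F x y := by
  obtain ⟨δ, hδ, hW⟩ := f.exists_add_mem_W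
  obtain ⟨η, hη, hfar⟩ := f.exists_le_deriv_of_far hδ
  obtain ⟨η', hη', hlong⟩ := f.exists_le_slope_of_le_sub hδ
  obtain ⟨B, hB, hderiv⟩ := f.exists_deriv_le
  obtain ⟨q, hq⟩ := (finite_range fun i => 4 * 2 ^ (f.s i - 1) * (f.be i / f.al i)).bddAbove
  refine ⟨max (max 1 q) (max (B / η) (B / η')), by simp, fun x u v y hxu huv hvy => ?_⟩
  have hxy : x < y := by linarith
  have hslope : 0 < slope f.F x y := by
    rw [slope_def_field]; exact div_pos (sub_pos.2 (f.mono hxy)) (sub_pos.2 hxy)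
  have hmvt : ∀ {u v}, u < v → ∃ ξ ∈ Ioo u v, deriv f.F ξ = slope f.F u v := fun huv =>
    exists_deriv_eq_slope' f.F huv f.differentiable.continuous.continuousOn
      f.differentiable.differentiableOn
  have hbound : ∀ ε > 0, ε ≤ slope f.F x y → slope f.F u v ≤ B / ε * slope f.F x y :=
    fun ε hε h => by
      obtain ⟨ξ, -, hξ⟩ := hmvt huv
      calc slope f.F u v ≤ B := hξ ▸ hderiv ξ
        _ = B / ε * ε := by field_simp
        _ ≤ B / ε * slope f.F x y := by gcongr
  rcases le_or_gt δ (y - x) with h | h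
  · refine (hbound η' hη' (hlong x y h)).trans ?_
    gcongr; simp
  rcases f.exists_near_critical_or_le_deriv hfar h with ⟨i, k, hik⟩ | hder
  · refine (f.slope_le_slope_near_critical hW i k hik hxu huv hvy).trans ?_
    gcongr
    exact le_max_of_le_left (le_max_of_le_right (hq (mem_range_self i)))
  · obtain ⟨ξ, hξ, hξ'⟩ := hmvt hxy
    refine (hbound η hη (hξ' ▸ hder ξ (Ioo_subset_Icc_self hξ))).trans ?_
    gcongr; simp

lemma slope_power_law_near_critical {δ : ℝ} (hW : ∀ i t, |t| < 3 * δ → f.c i + t ∈ f.W i)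
    (i : Fin f.N) {x y : ℝ} (hxy : x < y) (hc : x = f.c i ∨ y = f.c i) (hδ : y - x < δ) :
    f.al i * (1 / 2) ^ (f.s i - 1) / 4 * (y - x) ^ (f.s i - 1) ≤ slope f.F x y ∧
      slope f.F x y ≤ f.be i * (y - x) ^ (f.s i - 1) := by
  have hα := f.al_pos i
  have he : 0 ≤ f.s i - 1 := by linarith [f.s_gt_one i]
  have hL : 0 < y - x := sub_pos.2 hxy
  have hM : max |x - f.c i| |y - f.c i| = y - x := by
    rcases hc with rfl | rfl
    · rw [sub_self, abs_zero, max_eq_right (abs_nonneg _), abs_of_pos hL]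
    · rw [sub_self, abs_zero, max_eq_left (abs_nonneg _), abs_sub_comm, abs_of_pos hL]
  have hmem : ∀ t ∈ Icc x y, t - (0 : ℤ) ∈ f.W i := fun t ht => by
    have := abs_le_max_abs_abs (sub_le_sub_right ht.1 (f.c i)) (sub_le_sub_right ht.2 (f.c i))
    simpa using hW i (t - f.c i) (by linarith)
  have hup := slope_le_of_deriv_le_rpow (z := f.c i) f.differentiable he
    (hα.trans (f.al_lt_be i)).le
    (fun t ht => by simpa using (f.deriv_pinched 0 (hmem t ht)).2) le_rfl hxy le_rfl
  have hlow := le_slope_of_rpow_le_deriv (z := f.c i) f.differentiable f.mono.monotone he hα.le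
    (fun t ht => by simpa using (f.deriv_pinched 0 (hmem t ht)).1) hxy
  rw [hM] at hup hlow
  rw [div_eq_mul_one_div (y - x), Real.mul_rpow hL.le (by norm_num)] at hlow
  exact ⟨by linarith, hup⟩

lemma exists_hasPowerLawAt (i : Fin f.N) :
    ∃ α > 0, ∃ β, HasPowerLawAt f.F (f.c i) (f.s i - 1) α β := by
  obtain ⟨δ, hδ, hW⟩ := f.exists_add_mem_W
  obtain ⟨η, hη, hlong⟩ := f.exists_le_slope_of_le_sub hδ
  obtain ⟨B, hB, hderiv⟩ := f.exists_deriv_le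
  have hα := f.al_pos i
  have he : 0 ≤ f.s i - 1 := by linarith [f.s_gt_one i]
  set α := f.al i * (1 / 2) ^ (f.s i - 1) / 4
  set e := f.s i - 1
  have h : ∀ x y, x < y → (x = f.c i ∨ y = f.c i) → y - x ≤ 1 →
      min α η * (y - x) ^ e ≤ slope f.F x y ∧
        slope f.F x y ≤ max (f.be i) (B / δ ^ e) * (y - x) ^ e := fun x y hxy hc hlen => by
    have hL : 0 < y - x := sub_pos.2 hxy
    rcases lt_or_ge (y - x) δ with h | h
    · obtain ⟨hlow, hup⟩ := f.slope_power_law_near_critical hW i hxy hc h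
      exact ⟨(mul_le_mul_of_nonneg_right (min_le_left _ _) (by positivity)).trans hlow,
        hup.trans (mul_le_mul_of_nonneg_right (le_max_left _ _) (by positivity))⟩
    obtain ⟨ξ, -, hξ⟩ := exists_deriv_eq_slope' f.F hxy f.differentiable.continuous.continuousOn
      f.differentiable.differentiableOn
    constructor
    · calc min α η * (y - x) ^ e ≤ η * 1 := by
            gcongr
            exacts [min_le_right _ _, Real.rpow_le_one hL.le hlen he]
        _ ≤ slope f.F x y := by simpa using hlong x y h
    · calc slope f.F x y ≤ B := hξ ▸ hderiv ξ
        _ = B / δ ^ e * δ ^ e := by field_simp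
        _ ≤ max (f.be i) (B / δ ^ e) * (y - x) ^ e := by gcongr; exact le_max_right _ _
  refine ⟨min α η, lt_min (by positivity) hη, max (f.be i) (B / δ ^ e), fun y hy hyc => ?_⟩
  rcases lt_or_gt_of_ne hy with hlt | hlt
  · rw [abs_of_neg (sub_neg.2 hlt), neg_sub] at hyc ⊢
    rw [slope_comm]
    exact h y _ hlt (Or.inr rfl) hyc
  · rw [abs_of_pos (sub_pos.2 hlt)] at hyc ⊢
    exact h _ y hlt (Or.inl rfl) hyc

/-- The distribution function of length plus twice the number of critical points. Splitting the
two units between a floor and a ceiling makes the increment over a closed interval at least `1`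
also when the only critical point in it is an endpoint. -/
def lengthAddCritical (x : ℝ) : ℝ := x + ∑ i, ((⌊x - f.c i⌋ : ℝ) + ⌈x - f.c i⌉)

lemma monotone_floor_add_ceil (c : ℝ) : Monotone fun x : ℝ => (⌊x - c⌋ : ℝ) + ⌈x - c⌉ :=
  fun x y h => by
    have : x - c ≤ y - c := sub_le_sub_right h c
    dsimp only
    gcongr

lemma sub_add_jump_le_lengthAddCritical_sub {x y : ℝ} (h : x ≤ y) (i : Fin f.N) :
    y - x + (((⌊y - f.c i⌋ : ℝ) + ⌈y - f.c i⌉) - ((⌊x - f.c i⌋ : ℝ) + ⌈x - f.c i⌉)) ≤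
      f.lengthAddCritical y - f.lengthAddCritical x := by
  have := Finset.single_le_sum (fun j _ => sub_nonneg.2 (monotone_floor_add_ceil (f.c j) h))
    (Finset.mem_univ i)
  rw [Finset.sum_sub_distrib] at this
  unfold lengthAddCritical
  linarith

lemma sub_le_lengthAddCritical_sub {x y : ℝ} (h : x ≤ y) :
    y - x ≤ f.lengthAddCritical y - f.lengthAddCritical x := by
  have hi := monotone_floor_add_ceil (f.c ⟨0, f.N_pos⟩) h
  dsimp only at hi
  linarith [f.sub_add_jump_le_lengthAddCritical_sub h ⟨0, f.N_pos⟩]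

lemma one_le_lengthAddCritical_sub {x y : ℝ} (h : x < y) {i : Fin f.N} {k : ℤ}
    (hk : f.c i + k ∈ Icc x y) : 1 ≤ f.lengthAddCritical y - f.lengthAddCritical x := by
  have hceil : ⌈x - f.c i⌉ ≤ k := Int.ceil_le.2 (by linarith [hk.1])
  have hfloor : k ≤ ⌊y - f.c i⌋ := Int.le_floor.2 (by linarith [hk.2])
  have hlt : ⌊x - f.c i⌋ + 1 ≤ ⌈y - f.c i⌉ := by
    rw [Int.add_one_le_iff, Int.lt_ceil]
    exact (Int.floor_le _).trans_lt (by linarith)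
  have hjump : 1 ≤ (⌊y - f.c i⌋ + ⌈y - f.c i⌉) - (⌊x - f.c i⌋ + ⌈x - f.c i⌉) := by linarith
  have hjump' : (1 : ℝ) ≤ (⌊y - f.c i⌋ + ⌈y - f.c i⌉) - (⌊x - f.c i⌋ + ⌈x - f.c i⌉) := by
    exact_mod_cast hjump
  linarith [f.sub_add_jump_le_lengthAddCritical_sub h.le i]

lemma lengthAddCritical_add_one (x : ℝ) :
    f.lengthAddCritical (x + 1) = f.lengthAddCritical x + (1 + 2 * f.N) := by
  simp only [lengthAddCritical, add_sub_right_comm, Int.floor_add_one, Int.ceil_add_one,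
    Int.cast_add, Int.cast_one, Finset.sum_add_distrib, Finset.sum_const, Finset.card_univ,
    Fintype.card_fin, nsmul_eq_mul, mul_one]
  ring

lemma crossRatio_map_le_near_critical {i : Fin f.N} {k : ℤ} {a b c d : ℝ} (hab : a < b)
    (hbc : b < c) (hcd : c < d) (hW : ∀ t ∈ Icc a d, t - k ∈ f.W i)
    (hcrit : ∀ i (k : ℤ), f.c i + k ∉ Icc a d) :
    crossRatio (f.F a) (f.F b) (f.F c) (f.F d) ≤ crossRatio a b c d := by
  have hmem : ∀ x ∈ Icc (a - k) (d - k), x + k ∈ Icc a d := fun x hx =>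
    ⟨by linarith [hx.1], by linarith [hx.2]⟩
  have key := crossRatio_map_le_of_schwarzianDeriv_nonpos f.smooth f.mono
    (sub_lt_sub_right hab (k : ℝ)) (sub_lt_sub_right hbc (k : ℝ)) (sub_lt_sub_right hcd (k : ℝ))
    (fun x hx => (f.deriv_nonneg x).lt_of_ne fun h => by
      obtain ⟨j, l, rfl⟩ := f.critOnly x h.symm
      exact hcrit j (l + k) (by push_cast; simpa only [add_assoc] using hmem _ hx))
    (fun x hx => by
      refine (f.negSchwarzian i x (by simpa using hW _ (hmem x hx)) ?_).le
      rintro rfl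
      exact hcrit i k (hmem _ hx))
  have hF : ∀ x, f.F (x - k) = f.F x - k := fun x => by
    simpa [← sub_eq_add_neg] using f.map_add_int x (-k)
  simpa only [hF, crossRatio_sub_const] using key

lemma slope_le_slope_of_le_deriv {B η a d x u y w : ℝ} (hη : 0 < η) (hB : 0 ≤ B)
    (hB' : ∀ t, |deriv (deriv f.F) t| ≤ B) (hder : ∀ t ∈ Icc a d, η ≤ deriv f.F t)
    (hxu : x < u) (hyw : y < w) (hxu' : Icc x u ⊆ Icc a d) (hyw' : Icc y w ⊆ Icc a d) :
    slope f.F x u ≤ Real.exp (B / η * (d - a)) * slope f.F y w := by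
  have hcont {s} : ContinuousOn f.F s := f.differentiable.continuous.continuousOn
  obtain ⟨ξ, hξ, hξ'⟩ := exists_deriv_eq_slope' f.F hxu hcont f.differentiable.differentiableOn
  obtain ⟨ζ, hζ, hζ'⟩ := exists_deriv_eq_slope' f.F hyw hcont f.differentiable.differentiableOn
  have hξ := hxu' (Ioo_subset_Icc_self hξ)
  have hζ := hyw' (Ioo_subset_Icc_self hζ)
  have hdist : deriv f.F ξ - deriv f.F ζ ≤ B * |ξ - ζ| :=
    (le_abs_self _).trans <| Convex.norm_image_sub_le_of_norm_deriv_le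
      (fun t _ => (f.smooth.iterate_deriv' 2 1).differentiable (by norm_num) t)
      (fun t _ => hB' t) convex_univ (mem_univ ζ) (mem_univ ξ)
  have hξζ : |ξ - ζ| ≤ d - a := abs_le.2 ⟨by linarith [hξ.1, hζ.2], by linarith [hξ.2, hζ.1]⟩
  have had : 0 ≤ d - a := (abs_nonneg _).trans hξζ
  have hζη := hder ζ hζ
  rw [← hξ', ← hζ']
  calc deriv f.F ξ ≤ deriv f.F ζ + B * (d - a) := by
        have := mul_le_mul_of_nonneg_left hξζ hB
        linarith
    _ = deriv f.F ζ + B / η * (d - a) * η := by field_simp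
    _ ≤ deriv f.F ζ + B / η * (d - a) * deriv f.F ζ := by gcongr
    _ = (B / η * (d - a) + 1) * deriv f.F ζ := by ring
    _ ≤ Real.exp (B / η * (d - a)) * deriv f.F ζ := by
        have := Real.add_one_le_exp (B / η * (d - a))
        gcongr
        exact f.deriv_nonneg ζ

lemma crossRatio_map_le_of_le_deriv {B η a b c d : ℝ} (hη : 0 < η) (hB : 0 ≤ B)
    (hB' : ∀ t, |deriv (deriv f.F) t| ≤ B) (hder : ∀ t ∈ Icc a d, η ≤ deriv f.F t)
    (hab : a < b) (hbc : b < c) (hcd : c < d) :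
    crossRatio (f.F a) (f.F b) (f.F c) (f.F d) ≤
      Real.exp (2 * (B / η * (d - a))) * crossRatio a b c d := by
  rw [two_mul, Real.exp_add, ← sq]
  exact crossRatio_map_le_of_slope_le f.mono hab hbc hcd
    (f.slope_le_slope_of_le_deriv hη hB hB' hder hab (hab.trans hbc)
      (Icc_subset_Icc_right (by linarith)) (Icc_subset_Icc_right hcd.le))
    (f.slope_le_slope_of_le_deriv hη hB hB' hder hcd (hbc.trans hcd)
      (Icc_subset_Icc_left (by linarith)) (Icc_subset_Icc_left hab.le))

-- A short interval near the critical set has no distortion, because the Schwarzian derivative is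
-- negative there, and elsewhere the distortion is linear in the length.
lemma exists_crossRatio_map_le_of_short : ∃ ε > 0, ∃ D ≥ 0, ∀ a b c d, a < b → b < c → c < d →
    d - a < ε → (∀ i (k : ℤ), f.c i + k ∉ Icc a d) →
    crossRatio (f.F a) (f.F b) (f.F c) (f.F d) ≤
      Real.exp (D * (d - a)) * crossRatio a b c d := by
  obtain ⟨δ, hδ, hW⟩ := f.exists_add_mem_W
  obtain ⟨η, hη, hfar⟩ := f.exists_le_deriv_of_far hδ
  obtain ⟨B, hB, hB'⟩ := f.exists_abs_deriv_deriv_le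
  refine ⟨δ, hδ, 2 * (B / η), by positivity, fun a b c d hab hbc hcd h hcrit => ?_⟩
  rcases f.exists_near_critical_or_le_deriv hfar h with ⟨i, k, hik⟩ | hder
  · have hmem : ∀ t ∈ Icc a d, t - k ∈ f.W i := fun t ht => by
      have := hW i (t - (f.c i + k)) (by linarith [hik t ht])
      convert this using 1
      ring
    have had : 0 ≤ d - a := by linarith
    exact (f.crossRatio_map_le_near_critical hab hbc hcd hmem hcrit).trans
      (le_mul_of_one_le_left (crossRatio_pos hab hbc hcd).le (Real.one_le_exp (by positivity)))
  · rw [mul_assoc]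
    exact f.crossRatio_map_le_of_le_deriv hη hB.le hB' hder hab hbc hcd

lemma exists_isCrossRatioGauge : ∃ V K, IsCrossRatioGauge f.F V K := by
  obtain ⟨δ, hδ, D, hD, hshort⟩ := f.exists_crossRatio_map_le_of_short
  obtain ⟨Q, hQ, hslope⟩ := f.exists_slope_le_mul_slope
  set ε := min δ 1
  have hε : 0 < ε := lt_min hδ one_pos
  have hlog : 0 ≤ 2 * Real.log Q / ε := div_nonneg (by linarith [Real.log_nonneg hQ]) hε.le
  set E := 2 * Real.log Q / ε + D
  have hE : 0 ≤ E := add_nonneg hlog hD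
  refine ⟨fun x => E * f.lengthAddCritical x, E * (1 + 2 * f.N), fun x y h => ?_, fun x => ?_,
    fun a b c d hab hbc hcd => ?_⟩
  · exact mul_le_mul_of_nonneg_left (by linarith [f.sub_le_lengthAddCritical_sub h]) hE
  · simp only [f.lengthAddCritical_add_one]; ring
  have hlen := f.sub_le_lengthAddCritical_sub (by linarith : a ≤ d)
  have hcr := (crossRatio_pos hab hbc hcd).le
  rw [← mul_sub]
  set v := f.lengthAddCritical d - f.lengthAddCritical a
  rcases le_or_gt ε v with hv | hv
  · calc _ ≤ Q ^ 2 * crossRatio a b c d := crossRatio_map_le_of_slope_le f.mono hab hbc hcd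
          (hslope a a b c le_rfl hab hbc.le) (hslope b c d d hbc.le hcd le_rfl)
      _ = Real.exp (2 * Real.log Q / ε * ε) * crossRatio a b c d := by
          rw [div_mul_cancel₀ _ hε.ne', mul_comm 2, Real.exp_mul, Real.exp_log (by linarith),
            Real.rpow_two]
      _ ≤ Real.exp (E * v) * crossRatio a b c d := by
          gcongr
          exact le_add_of_nonneg_right hD
  · have hcrit : ∀ i (k : ℤ), f.c i + k ∉ Icc a d := fun i k hk => by
      linarith [f.one_le_lengthAddCritical_sub (by linarith) hk, min_le_right δ 1]
    refine (hshort a b c d hab hbc hcd (by linarith [min_le_left δ 1]) hcrit).trans ?_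
    gcongr
    · linarith
    · exact le_add_of_nonneg_left hlog

end MCM

/-! ### Closest returns -/

open CircleDeg1Lift (translationNumber)

/-- The lift `x ↦ u^a x - p` of the `a`-th iterate of the circle homeomorphism with lift `u`. -/
def returnMap (u : CircleDeg1Liftˣ) (a p : ℤ) (x : ℝ) : ℝ :=
  ((u ^ a : CircleDeg1Liftˣ) : CircleDeg1Lift) x - p

section ReturnMap

variable (u : CircleDeg1Liftˣ)

lemma returnMap_zero_zero (x : ℝ) : returnMap u 0 0 x = x := by simp [returnMap]

lemma returnMap_eq_sub (a p : ℤ) (x : ℝ) : returnMap u a p x = returnMap u a 0 x - p := by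
  simp [returnMap]

lemma returnMap_natCast_zero (n : ℕ) (x : ℝ) :
    returnMap u n 0 x = (u : CircleDeg1Lift)^[n] x := by
  simp [returnMap, CircleDeg1Lift.coe_pow]

lemma returnMap_natCast (n : ℕ) (p : ℤ) (x : ℝ) :
    returnMap u n p x = (u : CircleDeg1Lift)^[n] x - p := by
  rw [returnMap_eq_sub, returnMap_natCast_zero]

lemma returnMap_returnMap (a p b r : ℤ) (x : ℝ) :
    returnMap u a p (returnMap u b r x) = returnMap u (a + b) (p + r) x := by
  simp only [returnMap, CircleDeg1Lift.map_sub_int, zpow_add, Units.val_mul,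
    CircleDeg1Lift.mul_apply, Int.cast_add]
  ring

lemma returnMap_comm (a p b r : ℤ) (x : ℝ) :
    returnMap u a p (returnMap u b r x) = returnMap u b r (returnMap u a p x) := by
  rw [returnMap_returnMap, returnMap_returnMap, add_comm a, add_comm p]

lemma returnMap_neg_returnMap (a p : ℤ) (x : ℝ) :
    returnMap u (-a) (-p) (returnMap u a p x) = x := by
  rw [returnMap_returnMap, neg_add_cancel, neg_add_cancel, returnMap_zero_zero]

lemma returnMap_returnMap_neg (a p : ℤ) (x : ℝ) :
    returnMap u a p (returnMap u (-a) (-p) x) = x := by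
  rw [returnMap_comm, returnMap_neg_returnMap]

lemma returnMap_add_int (a p : ℤ) (x : ℝ) (m : ℤ) :
    returnMap u a p (x + m) = returnMap u a p x + m := by
  simp only [returnMap, CircleDeg1Lift.map_add_int]
  ring

lemma strictMono_returnMap (a p : ℤ) : StrictMono (returnMap u a p) := fun _ _ h =>
  sub_lt_sub_right ((CircleDeg1Lift.toOrderIso (u ^ a)).strictMono h) _

lemma continuous_returnMap (a p : ℤ) : Continuous (returnMap u a p) :=
  (CircleDeg1Lift.toOrderIso (u ^ a)).continuous.sub continuous_const

variable {u}

lemma returnMap_lt_returnMap {a p b r : ℤ}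
    (h : a * translationNumber u - p < b * translationNumber u - r) (x : ℝ) :
    returnMap u a p x < returnMap u b r x := by
  have hτ : ((r - p : ℤ) : ℝ) < translationNumber (u ^ (b - a) : CircleDeg1Liftˣ) := by
    rw [CircleDeg1Lift.translationNumber_zpow]
    push_cast
    linarith
  have key := CircleDeg1Lift.lt_map_of_int_lt_translationNumber _ hτ
    (((u ^ a : CircleDeg1Liftˣ) : CircleDeg1Lift) x)
  rw [← CircleDeg1Lift.mul_apply, ← Units.val_mul, ← zpow_add, sub_add_cancel] at key
  push_cast at key
  simp only [returnMap]
  linarith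

lemma returnMap_le_returnMap (hirr : Irrational (translationNumber u)) {a p b r : ℤ}
    (h : a * translationNumber u - p ≤ b * translationNumber u - r) (x : ℝ) :
    returnMap u a p x ≤ returnMap u b r x := by
  rcases h.lt_or_eq with h | h
  · exact (returnMap_lt_returnMap h x).le
  obtain rfl : a = b := by
    by_contra hab
    refine (hirr.intCast_mul (sub_ne_zero.2 hab)).ne_int (p - r) ?_
    push_cast
    linarith
  obtain rfl : p = r := by exact_mod_cast (sub_right_inj.1 h)
  exact le_rfl

end ReturnMap

/-- `(q, p)` and `(q', p')` are consecutive best approximations of `ρ`, the first from below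
and the second from above, so that for a lift with translation number `ρ` the maps
`returnMap u q p` and `returnMap u q' p'` are two consecutive closest returns. -/
structure IsReturnPair (ρ : ℝ) (q : ℕ) (p : ℤ) (q' : ℕ) (p' : ℤ) : Prop where
  pos : 0 < q
  le : q ≤ q'
  lower_pos : 0 < q * ρ - p
  lower_lt_one : q * ρ - p < 1
  upper_neg : q' * ρ - p' < 0
  add_pos : 0 < (q * ρ - p) + (q' * ρ - p')
  le_abs : ∀ (i : ℕ) (r : ℤ), 0 < i → i < q' → q * ρ - p ≤ |i * ρ - r|

namespace IsReturnPair

variable {u : CircleDeg1Liftˣ} {q q' : ℕ} {p p' : ℤ}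

lemma lt_lower (L : IsReturnPair (translationNumber u) q p q' p') (x : ℝ) :
    x < returnMap u q p x := by
  simpa only [returnMap_zero_zero] using
    returnMap_lt_returnMap (a := 0) (p := 0) (by simpa using L.lower_pos) x

lemma lower_inv_lt (L : IsReturnPair (translationNumber u) q p q' p') (x : ℝ) :
    returnMap u (-q) (-p) x < x := by
  simpa only [returnMap_returnMap_neg] using L.lt_lower (returnMap u (-q) (-p) x)

lemma upper_lt (L : IsReturnPair (translationNumber u) q p q' p') (x : ℝ) :
    returnMap u q' p' x < x := by
  simpa only [returnMap_zero_zero] using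
    returnMap_lt_returnMap (b := 0) (r := 0) (by simpa using L.upper_neg) x

lemma lower_lt_add_one (L : IsReturnPair (translationNumber u) q p q' p') (x : ℝ) :
    returnMap u q p x < x + 1 := by
  have := returnMap_lt_returnMap (a := q) (p := p) (b := 0) (r := -1)
    (by simpa using L.lower_lt_one) x
  rwa [returnMap_eq_sub u 0, returnMap_zero_zero, Int.cast_neg, Int.cast_one, sub_neg_eq_add]
    at this

lemma lower_inv_lt_upper (L : IsReturnPair (translationNumber u) q p q' p') (x : ℝ) :
    returnMap u (-q) (-p) x < returnMap u q' p' x := by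
  refine returnMap_lt_returnMap ?_ x
  push_cast
  linarith [L.add_pos]

lemma lt_upper_lower (L : IsReturnPair (translationNumber u) q p q' p') (x : ℝ) :
    x < returnMap u q' p' (returnMap u q p x) := by
  simpa only [returnMap_neg_returnMap] using L.lower_inv_lt_upper (returnMap u q p x)

lemma separated (L : IsReturnPair (translationNumber u) q p q' p')
    (hirr : Irrational (translationNumber u)) {i j : ℕ} (a b : ℤ) (hij : i < j) (hj : j < q')
    (w : ℝ) :
    returnMap u i a (returnMap u q p w) ≤ returnMap u j b w ∨
      returnMap u j b (returnMap u q p w) ≤ returnMap u i a w := by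
  have h := L.le_abs (j - i) (b - a) (by omega) (by omega)
  rw [Nat.cast_sub hij.le, _root_.le_abs] at h
  push_cast at h
  rw [returnMap_returnMap, returnMap_returnMap]
  refine h.imp (fun h => ?_) (fun h => ?_) <;>
    exact returnMap_le_returnMap hirr (by push_cast; linarith) w

end IsReturnPair

section Distortion

variable {u : CircleDeg1Liftˣ} {V : ℝ → ℝ} {K : ℝ}

lemma sum_increments_le_of_separated (hV : Monotone V) (s : Finset ℕ) {x y : ℕ → ℝ} {A B : ℝ}
    (hAB : A ≤ B) (hA : ∀ i ∈ s, A ≤ x i) (hB : ∀ i ∈ s, y i ≤ B) (hxy : ∀ i ∈ s, x i < y i)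
    (hsep : ∀ i ∈ s, ∀ j ∈ s, i ≠ j → y i ≤ x j ∨ y j ≤ x i) :
    ∑ i ∈ s, (V (y i) - V (x i)) ≤ V B - V A := by
  induction s using Finset.induction_on_max_value x generalizing B with
  | empty => simpa using hV hAB
  | insert a s ha hmax ih =>
    simp only [Finset.forall_mem_insert] at hA hB hxy hsep
    have hrest : ∑ i ∈ s, (V (y i) - V (x i)) ≤ V (x a) - V A := by
      refine ih hA.1 hA.2 (fun i hi => ?_) hxy.2 fun i hi j hj => (hsep.2 i hi).2 j hj
      exact ((hsep.2 i hi).1 (ne_of_mem_of_not_mem hi ha)).resolve_right fun h =>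
        (hxy.1.trans_le (h.trans (hmax i hi))).false
    rw [Finset.sum_insert ha]
    linarith [hV hB.1]

lemma IsCrossRatioGauge.map_add_int {F : ℝ → ℝ} (hV : IsCrossRatioGauge F V K) (x : ℝ) (m : ℤ) :
    V (x + m) = V x + m * K := by
  simpa using AddConstMapClass.map_add_int' (⟨V, hV.map_add_one⟩ : AddConstMap ℝ ℝ 1 K) x m

lemma IsCrossRatioGauge.increment_returnMap (hV : IsCrossRatioGauge u V K) (a p : ℤ) (x y : ℝ) :
    V (returnMap u a p y) - V (returnMap u a p x) =
      V (returnMap u a 0 y) - V (returnMap u a 0 x) := by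
  have hshift (z : ℝ) : V (returnMap u a p z) = V (returnMap u a 0 z) - p * K := by
    rw [returnMap_eq_sub, sub_eq_add_neg, ← Int.cast_neg, hV.map_add_int]
    push_cast
    ring
  rw [hshift, hshift]
  ring

lemma crossRatio_iterate_le (hV : IsCrossRatioGauge u V K) (m : ℕ) {a b c d : ℝ}
    (hab : a < b) (hbc : b < c) (hcd : c < d) :
    crossRatio (returnMap u m 0 a) (returnMap u m 0 b) (returnMap u m 0 c) (returnMap u m 0 d) ≤
      Real.exp (∑ i ∈ Finset.range m, (V (returnMap u i 0 d) - V (returnMap u i 0 a))) *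
        crossRatio a b c d := by
  induction m with
  | zero => simp [returnMap_zero_zero]
  | succ m ih =>
    have hmono := strictMono_returnMap u m 0
    have hstep (x : ℝ) : returnMap u (m + 1 : ℕ) 0 x = u (returnMap u m 0 x) := by
      simp only [returnMap_natCast_zero, Function.iterate_succ_apply']
    simp only [hstep]
    calc _ ≤ Real.exp (V (returnMap u m 0 d) - V (returnMap u m 0 a)) *
          crossRatio (returnMap u m 0 a) (returnMap u m 0 b) (returnMap u m 0 c)
            (returnMap u m 0 d) :=
          hV.crossRatio_map_le (hmono hab) (hmono hbc) (hmono hcd)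
      _ ≤ _ := mul_le_mul_of_nonneg_left ih (Real.exp_pos _).le
      _ = _ := by rw [Finset.sum_range_succ, Real.exp_add]; ring

end Distortion

/-- The maps `u^m`, for `m` up to the sum of two consecutive return times, distort cross-ratios by
a factor at most `C` on intervals no longer than three steps of the return map. -/
def HasReturnDistortion (u : CircleDeg1Liftˣ) (q : ℕ) (p : ℤ) (q' : ℕ) (C : ℝ) : Prop :=
  ∀ (m : ℕ) (r : ℤ), m ≤ q + q' → ∀ ⦃a b c d⦄, a < b → b < c → c < d →
    d ≤ (returnMap u q p)^[3] a →
    crossRatio (returnMap u m r a) (returnMap u m r b) (returnMap u m r c) (returnMap u m r d) ≤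
      C * crossRatio a b c d

namespace IsReturnPair

variable {u : CircleDeg1Liftˣ} {V : ℝ → ℝ} {K : ℝ} {q q' : ℕ} {p p' : ℤ}

lemma sum_increments_le (L : IsReturnPair (translationNumber u) q p q' p')
    (hirr : Irrational (translationNumber u)) (hV : IsCrossRatioGauge u V K) (w : ℝ) :
    ∑ i ∈ Finset.range q', (V (returnMap u i 0 (returnMap u q p w)) - V (returnMap u i 0 w)) ≤
      K := by
  set r : ℕ → ℤ := fun i => ⌊returnMap u i 0 w - w⌋ with hr
  have hfract (i : ℕ) : returnMap u i (r i) w = w + Int.fract (returnMap u i 0 w - w) := by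
    rw [returnMap_eq_sub, hr, Int.fract]
    ring
  have hend (i : ℕ) (hi : i < q') : returnMap u i (r i) (returnMap u q p w) ≤ w + 1 := by
    have hshift (x : ℝ) : returnMap u (0 : ℕ) (-1) x = x + 1 := by
      rw [returnMap_eq_sub, Nat.cast_zero, returnMap_zero_zero, Int.cast_neg, Int.cast_one,
        sub_neg_eq_add]
    rcases i.eq_zero_or_pos with rfl | hpos
    · have hr0 : r 0 = 0 := by simp [hr, returnMap_zero_zero]
      rw [hr0, Nat.cast_zero, returnMap_zero_zero]
      exact (L.lower_lt_add_one w).le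
    rcases L.separated hirr (-1) (r i) hpos hi w with h | h
    · rw [hshift, hfract] at h
      linarith [L.lt_lower w, Int.fract_lt_one (returnMap u i 0 w - w)]
    · exact h.trans_eq (hshift w)
  have hK : K = V (w + 1) - V w := by rw [hV.map_add_one]; ring
  rw [hK, Finset.sum_congr rfl fun (i : ℕ) _ =>
    (hV.increment_returnMap i (r i) w _).symm]
  refine sum_increments_le_of_separated hV.monotone _ (by linarith) (fun i _ => ?_)
    (fun i hi => hend i (Finset.mem_range.1 hi))
    (fun i _ => strictMono_returnMap u _ _ (L.lt_lower w)) fun i hi j hj hij => ?_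
  · rw [hfract]
    exact le_add_of_nonneg_right (Int.fract_nonneg _)
  · rw [Finset.mem_range] at hi hj
    rcases hij.lt_or_gt with h | h
    · exact L.separated hirr _ _ h hj w
    · exact (L.separated hirr _ _ h hi w).symm

lemma sum_increments_le_two_mul (L : IsReturnPair (translationNumber u) q p q' p')
    (hirr : Irrational (translationNumber u)) (hV : IsCrossRatioGauge u V K) {m : ℕ}
    (hm : m ≤ q + q') (w : ℝ) :
    ∑ i ∈ Finset.range m, (V (returnMap u i 0 (returnMap u q p w)) - V (returnMap u i 0 w)) ≤
      2 * K := by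
  have hshift (i : ℕ) (x : ℝ) :
      returnMap u (q' + i : ℕ) 0 x = returnMap u i 0 (returnMap u q' 0 x) := by
    rw [returnMap_returnMap, Nat.cast_add, add_comm (q' : ℤ), add_zero]
  calc _ ≤ ∑ i ∈ Finset.range (q' + q'),
        (V (returnMap u i 0 (returnMap u q p w)) - V (returnMap u i 0 w)) := by
        refine Finset.sum_le_sum_of_subset_of_nonneg
          (Finset.range_mono (hm.trans (Nat.add_le_add_right L.le _))) fun i _ _ => sub_nonneg.2 ?_
        exact hV.monotone ((strictMono_returnMap u _ _).monotone (L.lt_lower w).le)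
    _ ≤ K + K := by
        simp only [Finset.sum_range_add, hshift, returnMap_comm u q' 0 q p]
        exact add_le_add (L.sum_increments_le hirr hV w) (L.sum_increments_le hirr hV _)
    _ = 2 * K := by ring

theorem hasReturnDistortion (L : IsReturnPair (translationNumber u) q p q' p')
    (hirr : Irrational (translationNumber u)) (hV : IsCrossRatioGauge u V K) :
    HasReturnDistortion u q p q' (Real.exp (6 * K)) := by
  intro m r hm a b c d hab hbc hcd hd
  simp only [returnMap_eq_sub u m r, crossRatio_sub_const]
  refine (crossRatio_iterate_le hV m hab hbc hcd).trans ?_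
  gcongr
  · exact (crossRatio_pos hab hbc hcd).le
  set h := returnMap u q p
  calc ∑ i ∈ Finset.range m, (V (returnMap u i 0 d) - V (returnMap u i 0 a))
      ≤ ∑ i ∈ Finset.range m, (V (returnMap u i 0 (h (h (h a)))) - V (returnMap u i 0 a)) := by
        gcongr
        exact hV.monotone ((strictMono_returnMap u _ _).monotone hd)
    _ = ∑ i ∈ Finset.range m, (V (returnMap u i 0 (h (h (h a)))) - V (returnMap u i 0 (h (h a))))
        + ∑ i ∈ Finset.range m, (V (returnMap u i 0 (h (h a))) - V (returnMap u i 0 (h a)))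
        + ∑ i ∈ Finset.range m, (V (returnMap u i 0 (h a)) - V (returnMap u i 0 a)) := by
        simp only [← Finset.sum_add_distrib]
        exact Finset.sum_congr rfl fun i _ => by ring
    _ ≤ 2 * K + 2 * K + 2 * K := by
        gcongr <;> exact L.sum_increments_le_two_mul hirr hV hm _
    _ = 6 * K := by ring

theorem exists_return_mem_Ico (L : IsReturnPair (translationNumber u) q p q' p') (x y : ℝ) :
    ∃ (i : ℕ) (r : ℤ), i < q + q' ∧ returnMap u i r x ∈ Ico y (returnMap u q p y) := by
  obtain ⟨i, hi, hmin⟩ := Finset.exists_min_image (Finset.range (q + q'))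
    (fun i : ℕ => Int.fract (returnMap u i 0 x - y)) ⟨0, by simpa using Or.inl L.pos⟩
  rw [Finset.mem_range] at hi
  set r := ⌊returnMap u i 0 x - y⌋ with hr
  have hfract : returnMap u i r x = y + Int.fract (returnMap u i 0 x - y) := by
    rw [returnMap_eq_sub, hr, Int.fract]
    ring
  have hlast (j : ℕ) (s : ℤ) (hj : j < q + q') (hlt : returnMap u j s x < returnMap u i r x) :
      returnMap u j s x < y := by
    by_contra! hy
    have hle : Int.fract (returnMap u j 0 x - y) ≤ returnMap u j s x - y := by
      rw [returnMap_eq_sub u j s, ← Int.fract_sub_intCast _ s, sub_right_comm]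
      rw [returnMap_eq_sub] at hy
      exact sub_le_self _ (Int.cast_nonneg (Int.floor_nonneg.2 (by linarith)))
    linarith [hmin j (Finset.mem_range.2 hj)]
  refine ⟨i, r, hi, ?_, ?_⟩
  · rw [hfract]
    exact le_add_of_nonneg_right (Int.fract_nonneg _)
  rcases le_or_gt q i with h | h
  · have hback : returnMap u (-q) (-p) (returnMap u i r x) < y := by
      have hlt := L.lower_inv_lt (returnMap u i r x)
      rw [returnMap_returnMap, neg_add_eq_sub, ← Nat.cast_sub h] at hlt ⊢
      exact hlast _ _ (by omega) hlt
    simpa only [returnMap_returnMap_neg] using strictMono_returnMap u q p hback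
  · have hforth : returnMap u q' p' (returnMap u i r x) < y := by
      have hlt := L.upper_lt (returnMap u i r x)
      rw [returnMap_returnMap, ← Nat.cast_add] at hlt ⊢
      exact hlast _ _ (by omega) hlt
    calc returnMap u i r x < returnMap u q p (returnMap u q' p' (returnMap u i r x)) := by
          rw [returnMap_comm]
          exact L.lt_upper_lower _
      _ < returnMap u q p y := strictMono_returnMap u q p hforth

end IsReturnPair

/-- Consecutive steps along every orbit of `φ` have lengths comparable up to the factor `A`. -/
def ComparableSteps (φ : ℝ → ℝ) (A : ℝ) : Prop :=
  ∀ x, |φ x - x| ≤ A * |φ (φ x) - φ x| ∧ |φ (φ x) - φ x| ≤ A * |φ x - x|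

namespace ComparableSteps

variable {φ : ℝ → ℝ} {A : ℝ}

lemma of_lt (hφ : ∀ x, x < φ x) (h : ComparableSteps φ A) (x : ℝ) :
    φ x - x ≤ A * (φ (φ x) - φ x) ∧ φ (φ x) - φ x ≤ A * (φ x - x) := by
  simpa only [abs_of_pos (sub_pos.2 (hφ _))] using h x

lemma of_gt (hφ : ∀ x, φ x < x) (h : ComparableSteps φ A) (x : ℝ) :
    x - φ x ≤ A * (φ x - φ (φ x)) ∧ φ x - φ (φ x) ≤ A * (x - φ x) := by
  simpa only [abs_of_neg (sub_neg.2 (hφ _)), neg_sub] using h x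

end ComparableSteps

lemma exists_forall_returnMap_sub_le (u : CircleDeg1Liftˣ) (a p : ℤ) :
    ∃ z, ∀ w, returnMap u a p z - z ≤ returnMap u a p w - w := by
  obtain ⟨z, -, hz⟩ := isCompact_Icc.exists_isMinOn (nonempty_Icc.2 zero_le_one)
    ((continuous_returnMap u a p).sub continuous_id).continuousOn (s := Icc (0 : ℝ) 1)
  refine ⟨z, fun w => ?_⟩
  have hle : returnMap u a p z - z ≤ returnMap u a p (Int.fract w) - Int.fract w :=
    hz ⟨Int.fract_nonneg w, (Int.fract_lt_one w).le⟩
  have hper := returnMap_add_int u a p (Int.fract w) ⌊w⌋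
  rw [Int.fract_add_floor] at hper
  linarith [Int.fract_add_floor w]

namespace IsReturnPair

variable {u : CircleDeg1Liftˣ} {q q' : ℕ} {p p' : ℤ} {A C : ℝ}

lemma middle_step_le (L : IsReturnPair (translationNumber u) q p q' p') (hC : 0 ≤ C)
    (hD : HasReturnDistortion u q p q' C) {m : ℕ} {r : ℤ} (hm : m ≤ q + q') {x y : ℝ}
    (hxy : returnMap u m r x = y)
    (hleft : returnMap u q p y - y ≤ A * (y - returnMap u (-q) (-p) y))
    (hright : returnMap u q p y - y ≤
      A * (returnMap u q p (returnMap u q p y) - returnMap u q p y)) :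
    returnMap u q p x - x ≤ C * (1 + A) ^ 2 * (x - returnMap u (-q) (-p) x) ∧
      returnMap u q p x - x ≤
        C * (1 + A) ^ 2 * (returnMap u q p (returnMap u q p x) - returnMap u q p x) := by
  have hdist := hD m r hm (L.lower_inv_lt x) (L.lt_lower x) (L.lt_lower _) <| by
    simp only [Function.iterate_succ_apply, returnMap_returnMap_neg, Function.iterate_zero, id_eq,
      le_refl]
  simp only [returnMap_comm u m r, hxy] at hdist
  exact ⟨middle_le_left_of_crossRatio_le (L.lower_inv_lt x) (L.lt_lower x) (L.lt_lower _)
      (L.lower_inv_lt y) (L.lt_lower y) (L.lt_lower _) hleft hright hC hdist,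
    middle_le_right_of_crossRatio_le (L.lower_inv_lt x) (L.lt_lower x) (L.lt_lower _)
      (L.lower_inv_lt y) (L.lt_lower y) (L.lt_lower _) hleft hright hC hdist⟩

lemma step_inv_le_of_steps_le (L : IsReturnPair (translationNumber u) q p q' p') (hC : 0 ≤ C)
    (hD : HasReturnDistortion u q p q' C) {x : ℝ}
    (hleft : returnMap u q p x - x ≤ A * (x - returnMap u (-q) (-p) x))
    (hright : returnMap u q p x - x ≤
      A * (returnMap u q p (returnMap u q p x) - returnMap u q p x)) :
    x - returnMap u (-q) (-p) x ≤ C * (1 + A) ^ 2 * (returnMap u q p x - x) := by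
  simpa only [returnMap_returnMap_neg] using
    (L.middle_step_le hC hD (Nat.le_add_right q q') (returnMap_returnMap_neg u q p x)
      hleft hright).2

/-- The shortest step of the return map is flanked by steps that are not shorter, so the
distortion bound controls the two steps before it. -/
lemma two_steps_inv_le_of_min (L : IsReturnPair (translationNumber u) q p q' p') (hC : 0 ≤ C)
    (hD : HasReturnDistortion u q p q' C) {z : ℝ}
    (hz : ∀ w, returnMap u q p z - z ≤ returnMap u q p w - w) :
    z - returnMap u (-q) (-p) (returnMap u (-q) (-p) z) ≤
      (4 * C + C * (1 + 4 * C) ^ 2 * (4 * C)) * (returnMap u q p z - z) := by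
  set h := returnMap u q p
  set h' := returnMap u (-q) (-p)
  have hh' (x : ℝ) : h (h' x) = x := returnMap_returnMap_neg u q p x
  have hmin (x : ℝ) : h z - z ≤ x - h' x := by simpa only [hh'] using hz (h' x)
  have hfirst : z - h' z ≤ 4 * C * (h z - z) := by
    refine (L.step_inv_le_of_steps_le (A := 1) hC hD ?_ ?_).trans_eq (by ring)
    · simpa only [one_mul] using hmin z
    · simpa only [one_mul] using hz (h z)
  have hsecond : h' z - h' (h' z) ≤ C * (1 + 4 * C) ^ 2 * (z - h' z) := by
    have hstep := L.step_inv_le_of_steps_le (A := 4 * C) (x := h' z) hC hD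
    simp only [h', returnMap_returnMap_neg] at hstep
    refine hstep (hfirst.trans ?_) hfirst
    exact mul_le_mul_of_nonneg_left (hmin (h' z)) (by positivity)
  calc z - h' (h' z) = (z - h' z) + (h' z - h' (h' z)) := by ring
    _ ≤ 4 * C * (h z - z) + C * (1 + 4 * C) ^ 2 * (4 * C * (h z - z)) :=
        add_le_add hfirst (hsecond.trans (by gcongr))
    _ = _ := by ring

/-- Every point is carried by `u^m`, for some `m < q + q'`, next to the shortest step. -/
theorem comparableSteps (L : IsReturnPair (translationNumber u) q p q' p') (hC : 0 ≤ C)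
    (hD : HasReturnDistortion u q p q' C) :
    ComparableSteps (returnMap u q p)
      (C * (1 + (4 * C + C * (1 + 4 * C) ^ 2 * (4 * C))) ^ 2) := by
  set A := 4 * C + C * (1 + 4 * C) ^ 2 * (4 * C)
  have hA0 : 0 ≤ A := by positivity
  obtain ⟨z, hz⟩ := exists_forall_returnMap_sub_le u q p
  have htwo := L.two_steps_inv_le_of_min hC hD hz
  set h := returnMap u q p
  set h' := returnMap u (-q) (-p)
  have hh' (x : ℝ) : h (h' x) = x := returnMap_returnMap_neg u q p x
  have hsteps (x : ℝ) : h x - x ≤ C * (1 + A) ^ 2 * (x - h' x) ∧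
      h x - x ≤ C * (1 + A) ^ 2 * (h (h x) - h x) := by
    obtain ⟨m, r, hm, hle, hlt⟩ := L.exists_return_mem_Ico x (h' (h' z))
    set y := returnMap u m r x
    have hy : h y - y ≤ A * (h z - z) := by
      have hyz : h y < h (h' z) :=
        strictMono_returnMap u q p (by simpa only [h, h', returnMap_returnMap_neg] using hlt)
      rw [hh'] at hyz
      linarith
    refine L.middle_step_le hC hD hm.le rfl (hy.trans ?_) (hy.trans ?_)
    · exact mul_le_mul_of_nonneg_left (by simpa only [hh'] using hz (h' y)) hA0
    · exact mul_le_mul_of_nonneg_left (hz (h y)) hA0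
  intro x
  rw [abs_of_pos (sub_pos.2 (L.lt_lower x)), abs_of_pos (sub_pos.2 (L.lt_lower _))]
  refine ⟨(hsteps x).2, ?_⟩
  simpa only [h, h', returnMap_neg_returnMap] using (hsteps (h x)).1

lemma inv_step_le (L : IsReturnPair (translationNumber u) q p q' p')
    (hh : ComparableSteps (returnMap u q p) A) (x : ℝ) :
    x - returnMap u (-q) (-p) x ≤ A * (returnMap u q p x - x) := by
  simpa only [returnMap_returnMap_neg] using (hh.of_lt L.lt_lower (returnMap u (-q) (-p) x)).1

lemma lower_step_le_shifted_step (L : IsReturnPair (translationNumber u) q p q' p')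
    (hh : ComparableSteps (returnMap u q p) A) (x : ℝ) :
    returnMap u q p x - x ≤ (1 + A) * (returnMap u q' p' (returnMap u q p (returnMap u q p x)) -
      returnMap u q' p' (returnMap u q p x)) := by
  set h := returnMap u q p
  set g := returnMap u q' p'
  have hcomm (y : ℝ) : g (h y) = h (g y) := returnMap_comm ..
  have hinv : g (h x) - g x ≤ A * (h (g (h x)) - g (h x)) := by
    simpa only [h, g, returnMap_comm u q' p', returnMap_neg_returnMap] using
      L.inv_step_le hh (g (h x))
  have hlt : h x < h (g (h x)) := strictMono_returnMap u q p (L.lt_upper_lower x)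
  rw [hcomm (h x)]
  linarith [L.upper_lt x]

lemma upper_sub_le_mul_crossRatio (L : IsReturnPair (translationNumber u) q p q' p') (hA : 0 ≤ A)
    (hh : ComparableSteps (returnMap u q p) A) (hg : ComparableSteps (returnMap u q' p') A)
    (x : ℝ) :
    let h := returnMap u q p
    let g := returnMap u q' p'
    x - g x ≤ A * (1 + A) ^ 5 * crossRatio (g (g x)) (g x) (g (h x)) (g (h (h x))) *
      (h x - x) := by
  intro h g
  set h' := returnMap u (-q) (-p)
  have lt_h : ∀ x, x < h x := L.lt_lower
  have g_lt : ∀ x, g x < x := L.upper_lt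
  have gmono : StrictMono g := strictMono_returnMap u q' p'
  have h'mono : StrictMono h' := strictMono_returnMap u (-q) (-p)
  have hstep : 0 < h x - x := sub_pos.2 (lt_h x)
  have hinv : x - h' x ≤ A * (h x - x) := L.inv_step_le hh x
  have hinv₂ : h' x - h' (h' x) ≤ A * (A * (h x - x)) := by
    refine (L.inv_step_le hh (h' x)).trans ?_
    rw [returnMap_returnMap_neg]
    exact mul_le_mul_of_nonneg_left hinv hA
  have hleft_mid : g (h x) - g (g x) ≤ (1 + A) ^ 2 * (h x - x) := by
    have : h' (h' x) < g (g x) :=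
      (h'mono (L.lower_inv_lt_upper x)).trans (L.lower_inv_lt_upper (g x))
    nlinarith [g_lt (h x)]
  have hmid_right : g (h (h x)) - g x ≤ (1 + A) ^ 2 * (h x - x) := by
    have : h' x < g x := L.lower_inv_lt_upper x
    have := (hh.of_lt lt_h x).2
    nlinarith [g_lt (h (h x)), mul_nonneg (mul_nonneg hA hA) hstep.le]
  refine (le_mul_crossRatio_mul (gmono (g_lt x)) (gmono (lt_h x)) (gmono (lt_h (h x))) hstep hA
    (hg.of_gt g_lt x).1 (L.lower_step_le_shifted_step hh x) hleft_mid hmid_right).trans_eq ?_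
  ring

end IsReturnPair

lemma HasPowerLawAt.sub_le_mul_of_slope_ratio {F : ℝ → ℝ} {a b c e α β M : ℝ}
    (hF : HasPowerLawAt F c e α β) (he : 0 < e) (hα : 0 < α) (hM : 0 ≤ M)
    (hac : a < c) (hcb : c < b) (ha : c - a ≤ 1) (hb : b - c ≤ 1)
    (h : slope F c b ≤ M * slope F c a) :
    b - c ≤ (M * β / α) ^ e⁻¹ * (c - a) := by
  have hca := sub_pos.2 hac
  have hbc := sub_pos.2 hcb
  have hlow := (hF b hcb.ne' (by rwa [abs_of_pos hbc])).1
  have hupp := (hF a hac.ne (by rwa [abs_sub_comm, abs_of_pos hca])).2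
  rw [abs_of_pos hbc] at hlow
  rw [abs_sub_comm, abs_of_pos hca] at hupp
  have hpow : α * (b - c) ^ e ≤ M * β * (c - a) ^ e :=
    calc α * (b - c) ^ e ≤ M * slope F c a := hlow.trans h
      _ ≤ M * (β * (c - a) ^ e) := mul_le_mul_of_nonneg_left hupp hM
      _ = _ := by ring
  have hratio : ((b - c) / (c - a)) ^ e ≤ M * β / α := by
    rw [Real.div_rpow hbc.le hca.le, div_le_div_iff₀ (by positivity) hα]
    linarith
  rw [← div_le_iff₀ hca]
  have := Real.rpow_le_rpow (by positivity) hratio (inv_nonneg.2 he.le)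
  rwa [Real.rpow_rpow_inv (by positivity) he.ne'] at this

namespace IsReturnPair

variable {u : CircleDeg1Liftˣ} {q q' : ℕ} {p p' : ℤ} {A C : ℝ}

lemma two_steps_le (L : IsReturnPair (translationNumber u) q p q' p') (x : ℝ) :
    returnMap u q p (returnMap u q p x) ≤ (returnMap u q p)^[3] (returnMap u q' p' x) := by
  have hmono := strictMono_returnMap u q p
  simpa only [Function.iterate_succ_apply, Function.iterate_zero, id_eq, returnMap_comm u q' p' q p]
    using (hmono (hmono (L.lt_upper_lower x))).le

/-- The map `u ^ (q' - 1)` has bounded distortion, so `u ^ q'` is as flat at `c` as `u` is. -/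
lemma slope_le_mul_slope (L : IsReturnPair (translationNumber u) q p q' p') (hC : 0 ≤ C)
    (hD : HasReturnDistortion u q p q' C) (hA : 0 ≤ A)
    (hh : ComparableSteps (returnMap u q p) A) (hg : ComparableSteps (returnMap u q' p') A)
    (c : ℝ) :
    slope u c (returnMap u q p c) ≤
      A * (1 + A) ^ 5 * C * slope u c (returnMap u q' p' c) := by
  have hcross := L.upper_sub_le_mul_crossRatio hA hh hg c
  set h := returnMap u q p with hh_def
  set g := returnMap u q' p' with hg_def
  have lt_h : ∀ x, x < h x := L.lt_lower
  have g_lt : ∀ x, g x < x := L.upper_lt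
  have hu (x : ℝ) : u x = returnMap u 1 0 x := by simp [returnMap]
  have hmono : StrictMono u := (CircleDeg1Lift.toOrderIso u).strictMono
  have hlast (x : ℝ) : returnMap u (q' - 1 : ℕ) p' (u x) = g x := by
    rw [hu, returnMap_returnMap, add_zero, Nat.cast_sub (L.pos.trans_le L.le), Nat.cast_one,
      sub_add_cancel]
  have hlong : u (h (h c)) ≤ h^[3] (u (g c)) := by
    refine (hmono.monotone (L.two_steps_le c)).trans_eq ?_
    simp only [hu, hh_def, hg_def, Function.iterate_succ_apply, Function.iterate_zero, id_eq,
      returnMap_comm u 1 0]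
  have hdist := hD (q' - 1) p' (by omega) (hmono (g_lt c)) (hmono (lt_h c)) (hmono (lt_h (h c)))
    hlong
  simp only [hlast] at hdist
  have hleft := crossRatio_mul_sub_le_left (hmono (g_lt c)) (hmono (lt_h c)) (hmono (lt_h (h c)))
  have hstep := sub_pos.2 (lt_h c)
  rw [slope_comm u c (g c), slope_def_field, slope_def_field, ← mul_div_assoc,
    div_le_div_iff₀ hstep (sub_pos.2 (g_lt c))]
  calc (u (h c) - u c) * (c - g c)
      ≤ (u (h c) - u c) * (A * (1 + A) ^ 5 *
          (C * crossRatio (u (g c)) (u c) (u (h c)) (u (h (h c)))) * (h c - c)) := by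
        refine mul_le_mul_of_nonneg_left (hcross.trans ?_) (sub_pos.2 (hmono (lt_h c))).le
        gcongr
    _ = A * (1 + A) ^ 5 * C * (h c - c) *
          (crossRatio (u (g c)) (u c) (u (h c)) (u (h (h c))) * (u (h c) - u c)) := by ring
    _ ≤ A * (1 + A) ^ 5 * C * (h c - c) * (u c - u (g c)) := by gcongr
    _ = _ := by ring

theorem lower_step_le_of_hasPowerLawAt (L : IsReturnPair (translationNumber u) q p q' p')
    (hC : 0 ≤ C) (hD : HasReturnDistortion u q p q' C) (hA : 0 ≤ A)
    (hh : ComparableSteps (returnMap u q p) A) (hg : ComparableSteps (returnMap u q' p') A)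
    {c e α β : ℝ} (he : 0 < e) (hα : 0 < α) (hF : HasPowerLawAt u c e α β) :
    returnMap u q p c - c ≤
      (A * (1 + A) ^ 5 * C * β / α) ^ e⁻¹ * (c - returnMap u q' p' c) := by
  refine hF.sub_le_mul_of_slope_ratio he hα (by positivity) (L.upper_lt c) (L.lt_lower c) ?_ ?_
    (L.slope_le_mul_slope hC hD hA hh hg c)
  · have := L.lower_lt_add_one (returnMap u (-q) (-p) c)
    rw [returnMap_returnMap_neg] at this
    linarith [L.lower_inv_lt_upper c]
  · linarith [L.lower_lt_add_one c]

/-- Balance at the point `c` of the orbit of `z` is transported back to `z`. -/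
theorem lower_step_le_upper_step (L : IsReturnPair (translationNumber u) q p q' p')
    (hC : 0 ≤ C) (hD : HasReturnDistortion u q p q' C) (hA : 0 ≤ A)
    (hh : ComparableSteps (returnMap u q p) A) (hg : ComparableSteps (returnMap u q' p') A)
    {E c : ℝ} (hE : 0 ≤ E) (hc : returnMap u q p c - c ≤ E * (c - returnMap u q' p' c))
    {m : ℕ} (hm : m ≤ q + q') {r : ℤ} {x y z : ℝ} (hz : returnMap u m r z = c)
    (hzy : z ∈ Icc (returnMap u q' p' y) y) (hzx : z ∈ Icc x (returnMap u q p x)) :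
    returnMap u q p x - x ≤
      (1 + A) ^ 2 * (C * (1 + (A + E)) ^ 2) * (y - returnMap u q' p' y) := by
  have hsteps := hh.of_lt L.lt_lower
  have hupper := hg.of_gt L.upper_lt
  have hinv := L.inv_step_le hh z
  have hdist := hD m r hm (L.upper_lt z) (L.lt_lower z) (L.lt_lower _) (L.two_steps_le z)
  simp only [returnMap_comm u m r, hz] at hdist
  set h := returnMap u q p with hh_def
  set g := returnMap u q' p'
  have lt_h : ∀ x, x < h x := L.lt_lower
  have g_lt : ∀ x, g x < x := L.upper_lt
  have hbalance : h z - z ≤ C * (1 + (A + E)) ^ 2 * (z - g z) := by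
    refine middle_le_left_of_crossRatio_le (g_lt z) (lt_h z) (lt_h (h z)) (g_lt c) (lt_h c)
      (lt_h (h c)) (hc.trans ?_) ((hsteps c).1.trans ?_) hC hdist
    · exact mul_le_mul_of_nonneg_right (le_add_of_nonneg_left hA) (sub_pos.2 (g_lt c)).le
    · exact mul_le_mul_of_nonneg_right (le_add_of_nonneg_right hE) (sub_pos.2 (lt_h (h c))).le
  have hupper_step : z - g z ≤ (1 + A) * (y - g y) := by
    have : g (g y) ≤ g z := (strictMono_returnMap u q' p').monotone hzy.1
    linarith [hzy.2, (hupper y).2]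
  have hlower_step : h x - x ≤ (1 + A) * (h z - z) := by
    have hright : h x ≤ h z := (strictMono_returnMap u q p).monotone hzx.1
    have hleft := (strictMono_returnMap u (-q) (-p)).monotone hzx.2
    rw [hh_def, returnMap_neg_returnMap] at hleft
    linarith
  calc h x - x ≤ (1 + A) * (h z - z) := hlower_step
    _ ≤ (1 + A) * (C * (1 + (A + E)) ^ 2 * ((1 + A) * (y - g y))) := by
        gcongr
        exact hbalance.trans (by gcongr)
    _ = _ := by ring

end IsReturnPair

section Reflection

/-- Conjugation by `x ↦ -x`, which exchanges returns from below and returns from above. -/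
def reflection : CircleDeg1Lift →* CircleDeg1Lift where
  toFun f := ⟨⟨fun x => -f (-x), fun _ _ h => neg_le_neg (f.monotone (neg_le_neg h))⟩, fun x => by
    change -f (-(x + 1)) = -f (-x) + 1
    have := f.map_sub_nat (-x) 1
    rw [Nat.cast_one] at this
    rw [neg_add, ← sub_eq_add_neg, this, neg_sub, sub_eq_neg_add, add_comm]⟩
  map_one' := CircleDeg1Lift.ext fun x => neg_neg x
  map_mul' f g := CircleDeg1Lift.ext fun x => by
    change -f (g (-x)) = -f (-(-g (-x)))
    rw [neg_neg]

lemma reflection_apply (f : CircleDeg1Lift) (x : ℝ) : reflection f x = -f (-x) := rfl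

lemma translationNumber_reflection (u : CircleDeg1Liftˣ) :
    translationNumber (Units.map reflection u : CircleDeg1Liftˣ) = -translationNumber u := by
  refine CircleDeg1Lift.translationNumber_eq_of_tendsto₀ _
    ((u : CircleDeg1Lift).tendsto_translation_number₀.neg.congr fun n => ?_)
  rw [Units.coe_map, ← CircleDeg1Lift.coe_pow, ← map_pow, reflection_apply,
    neg_zero, neg_div]

lemma returnMap_reflection (u : CircleDeg1Liftˣ) (a p : ℤ) (x : ℝ) :
    returnMap (Units.map reflection u) a (-p) x = -returnMap u a p (-x) := by
  simp only [returnMap, ← map_zpow, Units.coe_map, reflection_apply]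
  push_cast
  ring

lemma IsCrossRatioGauge.reflect {f : CircleDeg1Lift} {V : ℝ → ℝ} {K : ℝ}
    (hV : IsCrossRatioGauge f V K) :
    IsCrossRatioGauge (reflection f) (fun x => -V (-x)) K where
  monotone _ _ h := neg_le_neg (hV.monotone (neg_le_neg h))
  map_add_one x := by
    have := hV.map_add_one (-(x + 1))
    rw [neg_add, neg_add_cancel_right] at this
    rw [neg_add]
    linarith
  crossRatio_map_le a b c d hab hbc hcd := by
    have := hV.crossRatio_map_le (neg_lt_neg hcd) (neg_lt_neg hbc) (neg_lt_neg hab)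
    simp only [reflection_apply]
    rwa [← crossRatio_neg, ← crossRatio_neg a, neg_neg, neg_neg, neg_neg, neg_neg,
      neg_sub_neg]

lemma HasPowerLawAt.reflect {f : CircleDeg1Lift} {c e α β : ℝ} (hf : HasPowerLawAt f c e α β) :
    HasPowerLawAt (reflection f) (-c) e α β := fun y hy hyc => by
  have habs : |y - -c| = |-y - c| := by rw [← abs_neg]; ring_nf
  have hslope : slope (reflection f) (-c) y = slope f c (-y) := by
    rw [slope_def_field, slope_def_field, reflection_apply, reflection_apply, neg_neg,
      ← neg_div_neg_eq]
    ring_nf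
  rw [habs] at hyc ⊢
  rw [hslope]
  exact hf (-y) (by rwa [ne_eq, neg_eq_iff_eq_neg]) hyc

lemma comparableSteps_of_reflection {u : CircleDeg1Liftˣ} {a p : ℤ} {A : ℝ}
    (h : ComparableSteps (returnMap (Units.map reflection u) a (-p)) A) :
    ComparableSteps (returnMap u a p) A := fun x => by
  have := h (-x)
  simp only [returnMap_reflection, neg_neg, neg_sub_neg] at this
  rwa [abs_sub_comm x, abs_sub_comm (returnMap u a p x) (returnMap ..)] at this

end Reflection

lemma exists_forall_comparableSteps (K : ℝ) :
    ∃ A ≥ 0, ∀ ⦃u : CircleDeg1Liftˣ⦄ ⦃V q p q' p'⦄, Irrational (translationNumber u) →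
      IsCrossRatioGauge u V K → IsReturnPair (translationNumber u) q p q' p' →
      ComparableSteps (returnMap u q p) A :=
  ⟨_, by positivity, fun _ _ _ _ _ _ hirr hV L =>
    L.comparableSteps (Real.exp_pos (6 * K)).le (L.hasReturnDistortion hirr hV)⟩

/-- The second return pair is the next one; seen in the mirror, it makes the steps of
`returnMap u q' p'` comparable. -/
theorem exists_forall_lower_step_le (K : ℝ) {e α : ℝ} (β : ℝ) (he : 0 < e) (hα : 0 < α) :
    ∃ E ≥ 0, ∀ ⦃u : CircleDeg1Liftˣ⦄ ⦃V c q p q' p' q'' p''⦄, Irrational (translationNumber u) →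
      IsCrossRatioGauge u V K → HasPowerLawAt u c e α β →
      IsReturnPair (translationNumber u) q p q' p' →
      IsReturnPair (-translationNumber u) q' (-p') q'' p'' →
      ∀ ⦃m r x y z⦄, m ≤ q + q' → returnMap u (m : ℕ) r z = c →
        z ∈ uIcc x (returnMap u q p x) → z ∈ uIcc y (returnMap u q' p' y) →
        |returnMap u q p x - x| ≤ E * |returnMap u q' p' y - y| := by
  obtain ⟨A, hA, hsteps⟩ := exists_forall_comparableSteps K
  have hC := (Real.exp_pos (6 * K)).le
  set C := Real.exp (6 * K)
  set E := max 0 ((A * (1 + A) ^ 5 * C * β / α) ^ e⁻¹)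
  have hE : 0 ≤ E := le_max_left _ _
  refine ⟨(1 + A) ^ 2 * (C * (1 + (A + E)) ^ 2), by positivity,
    fun u V c q p q' p' q'' p'' hirr hV hF L L' m r x y z hm hz hzx hzy => ?_⟩
  have hD := L.hasReturnDistortion hirr hV
  have hh := hsteps hirr hV L
  have hτ := translationNumber_reflection u
  have hg : ComparableSteps (returnMap u q' p') A :=
    comparableSteps_of_reflection (hsteps (hτ ▸ hirr.neg) hV.reflect (hτ ▸ L'))
  have hbalance : returnMap u q p c - c ≤ E * (c - returnMap u q' p' c) :=
    (L.lower_step_le_of_hasPowerLawAt hC hD hA hh hg he hα hF).trans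
      (mul_le_mul_of_nonneg_right (le_max_right _ _) (sub_pos.2 (L.upper_lt c)).le)
  rw [uIcc_of_le (L.lt_lower x).le] at hzx
  rw [uIcc_of_ge (L.upper_lt y).le] at hzy
  rw [abs_of_pos (sub_pos.2 (L.lt_lower x)), abs_of_neg (sub_neg.2 (L.upper_lt y)), neg_sub]
  exact L.lower_step_le_upper_step hC hD hA hh hg hE hbalance hm hz hzy hzx

/-! ### Continued fractions -/

section ContinuedFraction

lemma le_abs_of_isUnit_det {ρ : ℝ} {q p q' p' : ℤ} (hq : 0 < q) (hq' : 0 < q')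
    (h : 0 < q * ρ - p) (h' : q' * ρ - p' < 0) (hdet : IsUnit (q * p' - q' * p)) {i : ℤ} (r : ℤ)
    (hi : 0 < i) (hiq : i < q') : q * ρ - p ≤ |i * ρ - r| := by
  obtain ⟨x, y, hx, hy⟩ : ∃ x y : ℤ, i = x * q + y * q' ∧ r = x * p + y * p' := by
    rcases Int.isUnit_iff.1 hdet with h | h
    · exact ⟨i * p' - r * q', r * q - i * p, by linear_combination (-i) * h,
        by linear_combination (-r) * h⟩
    · exact ⟨r * q' - i * p', i * p - r * q, by linear_combination i * h,
        by linear_combination r * h⟩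
  have hcomb : i * ρ - r = x * (q * ρ - p) + y * (q' * ρ - p') := by
    rw [hx, hy]
    push_cast
    ring
  rw [hcomb]
  rcases le_or_gt y 0 with hy0 | hy0
  · have hx1 : 1 ≤ x := by
      by_contra! hx0
      nlinarith [mul_nonneg (by omega : 0 ≤ -x) hq.le]
    refine le_trans ?_ (le_abs_self _)
    have : (1 : ℝ) ≤ x := mod_cast hx1
    have : (y : ℝ) ≤ 0 := mod_cast hy0
    nlinarith
  · have hx1 : x ≤ -1 := by
      by_contra! hx0
      nlinarith [mul_nonneg (by omega : 0 ≤ x) hq.le]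
    refine le_trans ?_ (neg_le_abs _)
    have : (x : ℝ) ≤ -1 := mod_cast hx1
    have : (0 : ℝ) < y := mod_cast hy0
    nlinarith

variable {ρ : ℝ}

lemma qDen_add_two (ρ : ℝ) (n : ℕ) :
    qDen ρ (n + 2) = cfDigit ρ (n + 1) * qDen ρ (n + 1) + qDen ρ n := rfl

lemma pNum_add_two (ρ : ℝ) (n : ℕ) :
    pNum ρ (n + 2) = cfDigit ρ (n + 1) * pNum ρ (n + 1) + pNum ρ n := rfl

/-- The signed displacement `(-1)^n (q_n ρ - p_n)` of the `n`-th closest return of the rotation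
by `ρ`, which is positive when `ρ ∈ (0, 1)` is irrational. -/
def returnGap (ρ : ℝ) (n : ℕ) : ℝ := (-1) ^ n * (qDen ρ n * ρ - pNum ρ n)

lemma qDen_mul_pNum_sub (ρ : ℝ) (n : ℕ) :
    (qDen ρ n * pNum ρ (n + 1) - qDen ρ (n + 1) * pNum ρ n : ℤ) = (-1) ^ n := by
  induction n with
  | zero => simp [qDen, pNum]
  | succ n ih =>
    rw [qDen_add_two, pNum_add_two, pow_succ, ← ih]
    push_cast
    ring

lemma irrational_gaussMap_iterate (hirr : Irrational ρ) (n : ℕ) :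
    Irrational (gaussMap^[n] ρ) := by
  induction n with
  | zero => exact hirr
  | succ n ih =>
    rw [Function.iterate_succ_apply', gaussMap, Int.fract]
    exact ih.inv.sub_intCast _

lemma gaussMap_iterate_mem_Ioo (hirr : Irrational ρ) (hmem : ρ ∈ Ioo (0 : ℝ) 1) (n : ℕ) :
    gaussMap^[n] ρ ∈ Ioo (0 : ℝ) 1 := by
  cases n with
  | zero => exact hmem
  | succ n =>
    have hne := (irrational_gaussMap_iterate hirr (n + 1)).ne_zero
    rw [Function.iterate_succ_apply'] at hne ⊢
    exact ⟨(Int.fract_nonneg _).lt_of_ne' hne, Int.fract_lt_one _⟩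

lemma one_le_floor_inv_gaussMap_iterate (hirr : Irrational ρ) (hmem : ρ ∈ Ioo (0 : ℝ) 1) (n : ℕ) :
    1 ≤ ⌊(gaussMap^[n] ρ)⁻¹⌋ := by
  obtain ⟨h0, h1⟩ := gaussMap_iterate_mem_Ioo hirr hmem n
  rw [Int.le_floor, Int.cast_one]
  exact (one_le_inv₀ h0).2 h1.le

lemma one_le_cfDigit (hirr : Irrational ρ) (hmem : ρ ∈ Ioo (0 : ℝ) 1) (n : ℕ) :
    1 ≤ cfDigit ρ n :=
  (Int.le_toNat (zero_le_one.trans (one_le_floor_inv_gaussMap_iterate hirr hmem n))).2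
    (one_le_floor_inv_gaussMap_iterate hirr hmem n)

lemma cfDigit_eq_inv_sub (hirr : Irrational ρ) (hmem : ρ ∈ Ioo (0 : ℝ) 1) (n : ℕ) :
    (cfDigit ρ n : ℝ) = (gaussMap^[n] ρ)⁻¹ - gaussMap^[n + 1] ρ := by
  have hcast : (cfDigit ρ n : ℤ) = ⌊(gaussMap^[n] ρ)⁻¹⌋ :=
    Int.toNat_of_nonneg (zero_le_one.trans (one_le_floor_inv_gaussMap_iterate hirr hmem n))
  rw [Function.iterate_succ_apply', gaussMap, Int.fract, sub_sub_cancel, ← hcast,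
    Int.cast_natCast]

lemma qDen_succ_mul_sub_pNum (hirr : Irrational ρ) (hmem : ρ ∈ Ioo (0 : ℝ) 1) (n : ℕ) :
    qDen ρ (n + 1) * ρ - pNum ρ (n + 1) = -(qDen ρ n * ρ - pNum ρ n) * gaussMap^[n + 1] ρ := by
  have hdigit := cfDigit_eq_inv_sub hirr hmem
  induction n with
  | zero =>
    have h0 := hmem.1.ne'
    simp only [zero_add, qDen, pNum, hdigit, Function.iterate_zero, id_eq, Nat.cast_one,
      Nat.cast_zero]
    field_simp
    ring
  | succ n ih =>
    have h0 := (irrational_gaussMap_iterate hirr (n + 1)).ne_zero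
    have ih' : (qDen ρ n * ρ - pNum ρ n : ℝ) =
        -(qDen ρ (n + 1) * ρ - pNum ρ (n + 1)) * (gaussMap^[n + 1] ρ)⁻¹ := by
      rw [ih]
      field_simp
    rw [qDen_add_two, pNum_add_two]
    push_cast
    rw [hdigit]
    linear_combination ih'

lemma returnGap_succ (hirr : Irrational ρ) (hmem : ρ ∈ Ioo (0 : ℝ) 1) (n : ℕ) :
    returnGap ρ (n + 1) = returnGap ρ n * gaussMap^[n + 1] ρ := by
  rw [returnGap, qDen_succ_mul_sub_pNum hirr hmem, returnGap]
  ring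

lemma returnGap_pos (hirr : Irrational ρ) (hmem : ρ ∈ Ioo (0 : ℝ) 1) (n : ℕ) :
    0 < returnGap ρ n := by
  induction n with
  | zero => simpa [returnGap, qDen, pNum] using hmem.1
  | succ n ih =>
    rw [returnGap_succ hirr hmem]
    exact mul_pos ih (gaussMap_iterate_mem_Ioo hirr hmem _).1

lemma returnGap_succ_lt (hirr : Irrational ρ) (hmem : ρ ∈ Ioo (0 : ℝ) 1) (n : ℕ) :
    returnGap ρ (n + 1) < returnGap ρ n := by
  rw [returnGap_succ hirr hmem]
  exact mul_lt_of_lt_one_right (returnGap_pos hirr hmem n) (gaussMap_iterate_mem_Ioo hirr hmem _).2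

lemma returnGap_lt_one (hirr : Irrational ρ) (hmem : ρ ∈ Ioo (0 : ℝ) 1) (n : ℕ) :
    returnGap ρ n < 1 := by
  induction n with
  | zero => simpa [returnGap, qDen, pNum] using hmem.2
  | succ n ih => exact (returnGap_succ_lt hirr hmem n).trans ih

lemma qDen_pos (hirr : Irrational ρ) (hmem : ρ ∈ Ioo (0 : ℝ) 1) (n : ℕ) :
    0 < qDen ρ n := by
  induction n using Nat.twoStepInduction with
  | zero => exact one_pos
  | one => exact one_le_cfDigit hirr hmem 0
  | more n ih _ =>
    rw [qDen_add_two]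
    exact Nat.add_pos_right _ ih

lemma qDen_le_succ (hirr : Irrational ρ) (hmem : ρ ∈ Ioo (0 : ℝ) 1) (n : ℕ) :
    qDen ρ n ≤ qDen ρ (n + 1) := by
  cases n with
  | zero => exact qDen_pos hirr hmem 1
  | succ n =>
    rw [qDen_add_two]
    exact (Nat.le_mul_of_pos_left _ (one_le_cfDigit hirr hmem (n + 1))).trans
      (Nat.le_add_right _ _)

theorem isReturnPair_qDen (hirr : Irrational ρ) (hmem : ρ ∈ Ioo (0 : ℝ) 1) (n : ℕ) :
    IsReturnPair ((-1) ^ n * ρ) (qDen ρ n) ((-1) ^ n * pNum ρ n) (qDen ρ (n + 1))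
      ((-1) ^ n * pNum ρ (n + 1)) := by
  have hlower : qDen ρ n * ((-1) ^ n * ρ) - ((-1) ^ n * pNum ρ n : ℤ) = returnGap ρ n := by
    rw [returnGap]
    push_cast
    ring
  have hupper : qDen ρ (n + 1) * ((-1) ^ n * ρ) - ((-1) ^ n * pNum ρ (n + 1) : ℤ) =
      -returnGap ρ (n + 1) := by
    rw [returnGap]
    push_cast
    ring
  have hpos := returnGap_pos hirr hmem
  have hlt := returnGap_succ_lt hirr hmem n
  refine ⟨qDen_pos hirr hmem n, qDen_le_succ hirr hmem n, hlower ▸ hpos n,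
    hlower ▸ returnGap_lt_one hirr hmem n, ?_, ?_, fun i r hi hiq => ?_⟩
  · linarith [hpos (n + 1)]
  · linarith
  · have hdet := qDen_mul_pNum_sub ρ n
    refine le_abs_of_isUnit_det (q' := qDen ρ (n + 1)) (p' := (-1) ^ n * pNum ρ (n + 1))
      (mod_cast qDen_pos hirr hmem n) (mod_cast qDen_pos hirr hmem (n + 1)) ?_ ?_ ?_ r
      (mod_cast hi) (mod_cast hiq)
    · rw [Int.cast_natCast, hlower]
      exact hpos n
    · rw [Int.cast_natCast, hupper]
      exact neg_neg_of_pos (hpos (n + 1))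
    · rw [mul_left_comm, mul_left_comm (qDen ρ (n + 1) : ℤ), ← mul_sub, hdet]
      exact ((isUnit_neg_one (α := ℤ)).pow n).mul (isUnit_neg_one.pow n)

end ContinuedFraction

lemma neg_mem_uIcc_returnMap_reflection {u : CircleDeg1Liftˣ} {a p : ℤ} {x z : ℝ}
    (h : z ∈ uIcc x (returnMap u a p x)) :
    -z ∈ uIcc (-x) (returnMap (Units.map reflection u) a (-p) (-x)) := by
  rw [returnMap_reflection, neg_neg, ← image_neg_uIcc]
  exact mem_image_of_mem _ h

/-- Reflection reduces odd levels to even ones. -/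
theorem exists_forall_abs_step_le {u : CircleDeg1Liftˣ} {V : ℝ → ℝ} {K ρ c e α β : ℝ}
    (hτ : translationNumber u = ρ) (hirr : Irrational ρ) (hmem : ρ ∈ Ioo (0 : ℝ) 1)
    (hV : IsCrossRatioGauge u V K) (he : 0 < e) (hα : 0 < α) (hF : HasPowerLawAt u c e α β) :
    ∃ E ≥ 0, ∀ ⦃n m r x y z⦄, m ≤ qDen ρ n + qDen ρ (n + 1) → returnMap u (m : ℕ) r z = c →
      z ∈ uIcc x (returnMap u (qDen ρ n) (pNum ρ n) x) →
      z ∈ uIcc y (returnMap u (qDen ρ (n + 1)) (pNum ρ (n + 1)) y) →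
      |returnMap u (qDen ρ n) (pNum ρ n) x - x| ≤
        E * |returnMap u (qDen ρ (n + 1)) (pNum ρ (n + 1)) y - y| := by
  obtain ⟨E, hE, hstep⟩ := exists_forall_lower_step_le K β he hα
  refine ⟨E, hE, fun n m r x y z hm hz hzx hzy => ?_⟩
  have L := isReturnPair_qDen hirr hmem n
  have L' := isReturnPair_qDen hirr hmem (n + 1)
  subst hτ
  rcases n.even_or_odd with hn | hn <;>
    simp only [hn.neg_one_pow, hn.add_one.neg_one_pow, one_mul, neg_one_mul] at L L'
  · exact hstep hirr hV hF L L' hm hz hzx hzy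
  · have hτ := translationNumber_reflection u
    have key := hstep (hτ ▸ hirr.neg) hV.reflect hF.reflect (hτ.symm ▸ L)
      (by simpa only [hτ, neg_neg] using L') (r := -r) (z := -z) hm
      (by rw [returnMap_reflection, neg_neg, hz]) (neg_mem_uIcc_returnMap_reflection hzx)
      (neg_mem_uIcc_returnMap_reflection hzy)
    simp only [returnMap_reflection, neg_neg, neg_sub_neg] at key
    rwa [abs_sub_comm, abs_sub_comm y] at key

/-! ### Atoms of the dynamical partitions -/

section Atoms

variable {u : CircleDeg1Liftˣ} {ρ : ℝ}

lemma returnMap_mem_uIcc (hirr : Irrational (translationNumber u)) {a p b r c s : ℤ}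
    (h : a * translationNumber u - p ∈
      uIcc (b * translationNumber u - r) (c * translationNumber u - s)) (x : ℝ) :
    returnMap u a p x ∈ uIcc (returnMap u b r x) (returnMap u c s x) := by
  rw [mem_uIcc] at h ⊢
  exact h.imp (fun h => ⟨returnMap_le_returnMap hirr h.1 x, returnMap_le_returnMap hirr h.2 x⟩)
    fun h => ⟨returnMap_le_returnMap hirr h.1 x, returnMap_le_returnMap hirr h.2 x⟩

lemma intermediate_displacement_mem_uIcc (hirr : Irrational ρ) (hmem : ρ ∈ Ioo (0 : ℝ) 1)
    {n k : ℕ} (hk : k ≤ cfDigit ρ (n + 1)) :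
    qDen ρ n * ρ - pNum ρ n + k * (qDen ρ (n + 1) * ρ - pNum ρ (n + 1)) ∈
      uIcc 0 (qDen ρ n * ρ - pNum ρ n) := by
  set δ := qDen ρ n * ρ - pNum ρ n
  obtain ⟨hG, -⟩ := gaussMap_iterate_mem_Ioo hirr hmem (n + 1)
  obtain ⟨hG', -⟩ := gaussMap_iterate_mem_Ioo hirr hmem (n + 2)
  set G := gaussMap^[n + 1] ρ
  have hkG : k * G ≤ 1 := by
    have hk' : (k : ℝ) ≤ cfDigit ρ (n + 1) := mod_cast hk
    rw [← le_div_iff₀ hG, one_div]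
    linarith [cfDigit_eq_inv_sub hirr hmem (n + 1)]
  have hkG' : 0 ≤ k * G := by positivity
  rw [qDen_succ_mul_sub_pNum hirr hmem, mem_uIcc]
  rcases le_total 0 δ with hδ | hδ
  · exact Or.inl ⟨by nlinarith, by nlinarith⟩
  · exact Or.inr ⟨by nlinarith, by nlinarith⟩

lemma intermediate_return_mem_uIcc (hτ : translationNumber u = ρ) (hirr : Irrational ρ)
    (hmem : ρ ∈ Ioo (0 : ℝ) 1) {n k : ℕ} (hk : k ≤ cfDigit ρ (n + 1)) (x : ℝ) :
    returnMap u (qDen ρ n + k * qDen ρ (n + 1) : ℕ) (pNum ρ n + k * pNum ρ (n + 1) : ℕ) x ∈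
      uIcc x (returnMap u (qDen ρ n) (pNum ρ n) x) := by
  have key := returnMap_mem_uIcc (u := u) (hτ ▸ hirr) (b := 0) (r := 0)
    (a := (qDen ρ n + k * qDen ρ (n + 1) : ℕ)) (p := (pNum ρ n + k * pNum ρ (n + 1) : ℕ))
    (c := qDen ρ n) (s := pNum ρ n) ?_ x
  · rwa [returnMap_zero_zero] at key
  rw [hτ]
  convert intermediate_displacement_mem_uIcc hirr hmem hk using 2 <;> push_cast <;> ring

lemma returnMap_qDen_iterate_sub (ℓ j : ℕ) (p : ℤ) (x : ℝ) :
    returnMap u (qDen ρ ℓ) (pNum ρ ℓ) ((u : CircleDeg1Lift)^[j] x - p) =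
      (u : CircleDeg1Lift)^[j + qDen ρ ℓ] x - pNum ρ ℓ - p := by
  rw [← returnMap_natCast, returnMap_returnMap, add_comm (qDen ρ ℓ : ℤ), ← Nat.cast_add,
    returnMap_natCast]
  push_cast
  ring

lemma atomLen_eq_abs_step (x : ℝ) (ℓ j : ℕ) (p : ℤ) :
    atomLen (u : CircleDeg1Lift) ρ x ℓ j =
      |returnMap u (qDen ρ ℓ) (pNum ρ ℓ) (returnMap u j p x) - returnMap u j p x| := by
  rw [returnMap_natCast u j, returnMap_qDen_iterate_sub, sub_sub_sub_cancel_right, atomLen]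

lemma sub_intCast_mem_uIcc_step_of_mem_atomSet {x y : ℝ} {ℓ j : ℕ} (p : ℤ)
    (hy : y ∈ atomSet (u : CircleDeg1Lift) ρ x ℓ j) :
    y - p ∈ uIcc (returnMap u j p x)
      (returnMap u (qDen ρ ℓ) (pNum ρ ℓ) (returnMap u j p x)) := by
  rw [returnMap_natCast u j, returnMap_qDen_iterate_sub, ← image_sub_const_uIcc]
  exact mem_image_of_mem _ hy

lemma uIcc_intermediate_step_subset (hτ : translationNumber u = ρ) (hirr : Irrational ρ)
    (hmem : ρ ∈ Ioo (0 : ℝ) 1) {n k : ℕ} (hk : k < cfDigit ρ (n + 1)) {x y : ℝ}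
    (hy : returnMap u (qDen ρ n + k * qDen ρ (n + 1) : ℕ)
      (pNum ρ n + k * pNum ρ (n + 1) : ℕ) x = y) :
    uIcc y (returnMap u (qDen ρ (n + 1)) (pNum ρ (n + 1)) y) ⊆
      uIcc x (returnMap u (qDen ρ n) (pNum ρ n) x) := by
  subst hy
  refine uIcc_subset_uIcc (intermediate_return_mem_uIcc hτ hirr hmem hk.le x) ?_
  have key := intermediate_return_mem_uIcc hτ hirr hmem (k := k + 1) hk x
  rw [returnMap_returnMap]
  convert key using 2 <;> push_cast <;> ring

theorem atomLen_le_atomLen (hτ : translationNumber u = ρ) (hirr : Irrational ρ)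
    (hmem : ρ ∈ Ioo (0 : ℝ) 1) {n k : ℕ} (hk : k < cfDigit ρ (n + 1)) (x : ℝ) :
    atomLen (u : CircleDeg1Lift) ρ x (n + 1) (qDen ρ n + k * qDen ρ (n + 1)) ≤
      atomLen (u : CircleDeg1Lift) ρ x n 0 := by
  rw [atomLen_eq_abs_step x (n + 1) _ (pNum ρ n + k * pNum ρ (n + 1) : ℕ),
    atomLen_eq_abs_step x n 0 0, Nat.cast_zero, returnMap_zero_zero]
  exact abs_sub_le_of_uIcc_subset_uIcc (uIcc_intermediate_step_subset hτ hirr hmem hk rfl)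

theorem exists_forall_atomLen_le_mul {V : ℝ → ℝ} {K c e α β : ℝ} (hτ : translationNumber u = ρ)
    (hirr : Irrational ρ) (hmem : ρ ∈ Ioo (0 : ℝ) 1) (hV : IsCrossRatioGauge u V K) (he : 0 < e)
    (hα : 0 < α) (hF : HasPowerLawAt u c e α β) :
    ∃ E ≥ 0, ∀ ⦃n k i m x y⦄, k < cfDigit ρ (n + 1) →
      y ∈ atomSet (u : CircleDeg1Lift) ρ x (n + 1) (qDen ρ n + k * qDen ρ (n + 1)) →
      i ≤ qDen ρ (n + 1) → (u : CircleDeg1Lift)^[i] y = c + (m : ℤ) →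
      atomLen (u : CircleDeg1Lift) ρ x n 0 ≤
        E * atomLen (u : CircleDeg1Lift) ρ x (n + 1) (qDen ρ n + k * qDen ρ (n + 1)) := by
  obtain ⟨E, hE, hstep⟩ := exists_forall_abs_step_le hτ hirr hmem hV he hα hF
  refine ⟨E, hE, fun n k i m x y hk hy hi hc => ?_⟩
  set P : ℤ := ((pNum ρ n + k * pNum ρ (n + 1) : ℕ) : ℤ)
  have hatom := sub_intCast_mem_uIcc_step_of_mem_atomSet P hy
  rw [atomLen_eq_abs_step x (n + 1) _ P, atomLen_eq_abs_step x n 0 0, Nat.cast_zero,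
    returnMap_zero_zero]
  refine hstep (hi.trans (Nat.le_add_left _ _)) (r := m - P) ?_
    (uIcc_intermediate_step_subset hτ hirr hmem hk rfl hatom) hatom
  rw [sub_eq_add_neg y, ← Int.cast_neg, returnMap_add_int, returnMap_natCast, hc]
  push_cast
  ring

end Atoms

lemma exists_deriv_iterate_eq_zero {𝕜 : Type*} [NontriviallyNormedField 𝕜] {F : 𝕜 → 𝕜}
    (hF : Differentiable 𝕜 F) {m : ℕ} {x : 𝕜} (h : deriv F^[m] x = 0) :
    ∃ i < m, deriv F (F^[i] x) = 0 := by
  induction m with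
  | zero => simp at h
  | succ m ih =>
    rw [Function.iterate_succ', deriv_comp x (hF _) (hF.iterate m x), mul_eq_zero] at h
    rcases h with h | h
    · exact ⟨m, m.lt_succ_self, h⟩
    · obtain ⟨i, hi, h⟩ := ih h
      exact ⟨i, hi.trans m.lt_succ_self, h⟩

namespace MCM

variable (f : MCM)

lemma surjective : Function.Surjective f.F := by
  intro y
  obtain ⟨x, -, hx⟩ := intermediate_value_Icc (Int.cast_le.2 (Int.le_add_one le_rfl))
    f.smooth.continuous.continuousOn
    (show y ∈ Icc (f.F (⌊y - f.F 0⌋ : ℤ)) (f.F ((⌊y - f.F 0⌋ + 1 : ℤ))) by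
      have hint (k : ℤ) : f.F k = f.F 0 + k := by simpa using f.map_add_int 0 k
      rw [hint, hint, Int.cast_add, Int.cast_one]
      constructor <;> linarith [Int.floor_le (y - f.F 0), Int.lt_floor_add_one (y - f.F 0)])
  exact ⟨x, hx⟩

lemma exists_unit_coe_eq : ∃ u : CircleDeg1Liftˣ, ⇑(u : CircleDeg1Lift) = f.F := by
  obtain ⟨u, hu⟩ : IsUnit f.toLift :=
    CircleDeg1Lift.isUnit_iff_bijective.2 ⟨f.mono.injective, f.surjective⟩
  exact ⟨u, congrArg DFunLike.coe hu⟩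

end MCM

theorem critical_atoms_are_large_general (f : MCM) (ρ : ℝ) (hirr : Irrational ρ)
    (hmem : ρ ∈ Set.Ioo (0 : ℝ) 1) (hrot : HasRotationNumber f.F ρ) :
    ∃ K : ℝ, 1 < K ∧ ∀ (x₀ : ℝ) (n k : ℕ), k < cfDigit ρ (n + 1) →
      (∃ x ∈ atomSet f.F ρ x₀ (n + 1) (qDen ρ n + k * qDen ρ (n + 1)),
        deriv (f.F^[qDen ρ (n + 1)]) x = 0) →
      K⁻¹ * atomLen f.F ρ x₀ n 0 ≤
          atomLen f.F ρ x₀ (n + 1) (qDen ρ n + k * qDen ρ (n + 1)) ∧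
        atomLen f.F ρ x₀ (n + 1) (qDen ρ n + k * qDen ρ (n + 1)) ≤ K * atomLen f.F ρ x₀ n 0 := by
  obtain ⟨u, hu⟩ := f.exists_unit_coe_eq
  have hτ : translationNumber u = ρ :=
    CircleDeg1Lift.translationNumber_eq_of_tendsto₀ _ (by rwa [hu])
  obtain ⟨V, G, hV⟩ := f.exists_isCrossRatioGauge
  choose α hα β hpow using f.exists_hasPowerLawAt
  rw [← hu] at hV hpow
  choose E hE hlarge using fun l => exists_forall_atomLen_le_mul hτ hirr hmem hV
    (sub_pos.2 (f.s_gt_one l)) (hα l) (hpow l)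
  have hsum : 0 ≤ ∑ l, E l := Finset.sum_nonneg fun l _ => hE l
  refine ⟨2 + ∑ l, E l, by linarith, fun x₀ n k hk ⟨x, hx, hd⟩ => ?_⟩
  obtain ⟨i, hi, hd⟩ := exists_deriv_iterate_eq_zero f.differentiable hd
  obtain ⟨l, m, hlm⟩ := f.critOnly _ hd
  have hEl : E l ≤ ∑ l, E l := Finset.single_le_sum (fun l _ => hE l) (Finset.mem_univ l)
  rw [← hu] at hx hlm ⊢
  constructor
  · rw [inv_mul_le_iff₀ (by linarith)]
    exact (hlarge l hk hx hi.le hlm).trans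
      (mul_le_mul_of_nonneg_right (by linarith) (abs_nonneg _))
  · exact (atomLen_le_atomLen hτ hirr hmem hk x₀).trans
      (le_mul_of_one_le_left (abs_nonneg _) (by linarith))

/-- **critical atoms are large.** Let `0 ≤ k < a_{n+1}` be such that the
interval `Δ_k = f^{q_n + k q_{n+1}}(I_{n+1}(c₀)) ⊂ I_n(c₀)` contains a critical point of
`f^{q_{n+1}}`. Then `|Δ_k| ≍ |I_n(c₀)|`, with a constant depending only on `f`. -/
theorem critical_atoms_are_large
    (f : MCM) (ρ : ℝ) (hirr : Irrational ρ) (hmem : ρ ∈ Set.Ioo (0 : ℝ) 1)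
    (hrot : HasRotationNumber f.F ρ) (i₀ : Fin f.N) :
    ∃ K : ℝ, 1 < K ∧ ∀ n k : ℕ, k < cfDigit ρ (n + 1) →
      (∃ x ∈ atomSet f.F ρ (f.c i₀) (n + 1) (qDen ρ n + k * qDen ρ (n + 1)),
        deriv (f.F^[qDen ρ (n + 1)]) x = 0) →
      K⁻¹ * atomLen f.F ρ (f.c i₀) n 0 ≤
          atomLen f.F ρ (f.c i₀) (n + 1) (qDen ρ n + k * qDen ρ (n + 1)) ∧
        atomLen f.F ρ (f.c i₀) (n + 1) (qDen ρ n + k * qDen ρ (n + 1)) ≤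
          K * atomLen f.F ρ (f.c i₀) n 0 :=
  let ⟨K, hK, hatoms⟩ := critical_atoms_are_large_general f ρ hirr hmem hrot
  ⟨K, hK, hatoms (f.c i₀)⟩
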